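/- arXiv:2007.09575 — 3 statements merged into one kernel-verified Lean document; each statement's English description precedes it below -/
import Mathlib

section
/- Let B ∈ ℝ and C > 0, and consider the Whittaker–Hill operator with potential v(x) = −(B·cos 2x + C·cos 4x). (i) If B/(4√(2C)) = n + 1/2 or B/(4√(2C)) = −(n + 1/2) for some nonnegative integer n, then every even gap beyond the first n is closed, i.e., γ_{2m} = 0 for all integers m > n. (ii) If B/(4√(2C)) = n + 1 or B/(4√(2C)) = −(n + 1) for some nonnegative integer n, then every odd gap beyond the first n+1 is closed, i.e., γ_{2m−1} = 0 for all integers m ≥ n + 2. -/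
open Real

noncomputable section

/-- `f` is a (possibly zero) solution of `-f'' + v f = λ f` that is `π`-periodic. -/
def IsPerEF (v : ℝ → ℝ) (lam : ℝ) (f : ℝ → ℝ) : Prop :=
  ContDiff ℝ 2 f ∧ (∀ x, -(deriv (deriv f) x) + v x * f x = lam * f x) ∧
    ∀ x, f (x + Real.pi) = f x

/-- `f` is a (possibly zero) solution of `-f'' + v f = λ f` with `f(x+π) = -f(x)`. -/
def IsSemiEF (v : ℝ → ℝ) (lam : ℝ) (f : ℝ → ℝ) : Prop :=
  ContDiff ℝ 2 f ∧ (∀ x, -(deriv (deriv f) x) + v x * f x = lam * f x) ∧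
    ∀ x, f (x + Real.pi) = -f x

/-- Multiplicity of `λ` as a periodic eigenvalue: the dimension of the space of
π-periodic solutions. -/
def perMult (v : ℝ → ℝ) (lam : ℝ) : ℕ :=
  Module.finrank ℝ (Submodule.span ℝ {f : ℝ → ℝ | IsPerEF v lam f})

/-- Multiplicity of `λ` as a semi-periodic eigenvalue. -/
def semiMult (v : ℝ → ℝ) (lam : ℝ) : ℕ :=
  Module.finrank ℝ (Submodule.span ℝ {f : ℝ → ℝ | IsSemiEF v lam f})

/-- `lamP` enumerates the periodic eigenvalues of `-D² + v` in nondecreasing order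
with multiplicity (indices `0, 1, 2, …`). -/
def EnumPer (v : ℝ → ℝ) (lamP : ℕ → ℝ) : Prop :=
  Monotone lamP ∧ (∀ n, ∃ f, f ≠ 0 ∧ IsPerEF v (lamP n) f) ∧
    ∀ lam : ℝ, Nat.card {n : ℕ // lamP n = lam} = perMult v lam

/-- `lamM` enumerates the semi-periodic eigenvalues of `-D² + v` in nondecreasing order
with multiplicity (indices `1, 2, 3, …`). -/
def EnumSemi (v : ℝ → ℝ) (lamM : ℕ → ℝ) : Prop :=
  MonotoneOn lamM {n : ℕ | 1 ≤ n} ∧ (∀ n, 1 ≤ n → ∃ f, f ≠ 0 ∧ IsSemiEF v (lamM n) f) ∧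
    ∀ lam : ℝ, Nat.card {n : ℕ // 1 ≤ n ∧ lamM n = lam} = semiMult v lam

/-- The length of the `n`-th instability interval: `λ_{n+1}^- - λ_n^-` for odd `n`,
`λ_n^+ - λ_{n-1}^+` for even `n`. -/
def gapLen (lamP lamM : ℕ → ℝ) (n : ℕ) : ℝ :=
  if Odd n then lamM (n + 1) - lamM n else lamP n - lamP (n - 1)

/-!
Write `B = 4a (N + 1)` and `C = 2a²`. Conjugation with the gauge factor `exp (a cos 2x)` turns the
Whittaker–Hill operator into Ince's operator `I(a, N) ψ = -ψ'' + 4a (sin 2x ψ' - N cos 2x ψ)`, which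
preserves the `(N + 1)`-dimensional space of homogeneous trigonometric polynomials of degree `N`.
Since a nonzero such polynomial has at most `N` zeros per period, Sturm comparison shows that the
eigenvalues this space carries are the `N + 1` lowest ones among those of the boundary condition
`f (x + π) = (-1)^N f x`.

For every later eigenvalue there is an even or odd eigenfunction, and it is not a polynomial. The
constant-coefficient operator `T` of order `N + 1` annihilating the polynomials satisfies
`T I(a, N) = I(a, -N - 2) T`, so `T` maps the eigenfunction to a nonzero solution of Ince's equation
with parameters `a, -N - 2`. A shift by `π / 2` changes `a` to `-a`, and the gauge
`exp (-a cos 2x)` leads back to the same Whittaker–Hill operator; on the way the parity gets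
reversed. Hence all later eigenvalues are double, and they form consecutive pairs.
-/

namespace WhittakerHill

open Set Filter Topology

open scoped ContDiff

section Counting

variable {s : ℕ → ℝ}

lemma eq_succ_of_card_fiber_eq_two (hs : Monotone s) {n : ℕ} (hlt : ∀ j < n, s j < s n)
    (h2 : ∀ k, n ≤ k → Nat.card {j // s j = s k} = 2) (k : ℕ) :
    s (n + 2 * k) = s (n + 2 * k + 1) := by
  have pairing : ∀ m, n ≤ m → (∀ j < m, s j < s m) → s m = s (m + 1) ∧ s m < s (m + 2) := by
    intro m hnm hm
    obtain ⟨⟨j, hj⟩, hjm, huniq⟩ :=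
      (Nat.card_eq_two_iff' (⟨m, rfl⟩ : {j // s j = s m})).1 (h2 m hnm)
    have hlt_j : m < j := by
      rcases lt_trichotomy j m with h | h | h
      · exact absurd hj (hm j h).ne
      · exact absurd (Subtype.ext h) hjm
      · exact h
    have hsucc : s m = s (m + 1) := le_antisymm (hs m.le_succ) (hj ▸ hs hlt_j)
    refine ⟨hsucc, (hs (by omega)).lt_of_ne fun h => ?_⟩
    have h1 := huniq ⟨m + 1, hsucc.symm⟩ (by simp)
    have h2 := huniq ⟨m + 2, h.symm⟩ (by simp)
    simp only [Subtype.mk.injEq] at h1 h2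
    omega
  have below : ∀ k, ∀ j < n + 2 * k, s j < s (n + 2 * k) := by
    intro k
    induction k with
    | zero => exact hlt
    | succ k ih =>
      have hstep := (pairing _ (by omega) ih).2
      intro j hj
      refine lt_of_le_of_lt ?_ hstep
      rcases lt_or_ge j (n + 2 * k) with h | h
      · exact (ih j h).le
      · exact (hs (by omega)).trans (pairing _ (by omega) ih).1.ge
  exact (pairing _ (by omega) (below k)).1

lemma mem_iff_lt_sum_card_fiber (hs : Monotone s) {Λ : Finset ℝ}
    (hΛ : ∀ μ ∈ Λ, Nat.card {k // s k = μ} ≠ 0) (hlt : ∀ k, s k ∉ Λ → ∀ μ ∈ Λ, μ < s k) (k : ℕ) :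
    s k ∈ Λ ↔ k < ∑ μ ∈ Λ, Nat.card {k // s k = μ} := by
  have hfin : (s ⁻¹' Λ).Finite := Λ.finite_toSet.preimage' fun μ hμ =>
    Set.finite_coe_iff.1 (Nat.finite_of_card_ne_zero (hΛ μ hμ))
  have hlower : IsLowerSet (s ⁻¹' Λ) := fun j i hij hj => by
    by_contra hi
    exact (hlt i hi _ hj).not_ge (hs hij)
  obtain ⟨a, ha⟩ := hlower.eq_univ_or_Iio.resolve_left
    fun h => Set.infinite_univ (h ▸ hfin)
  have hmem : ∀ k, s k ∈ Λ ↔ k < a := fun k => Set.ext_iff.1 ha k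
  have hcard : a = ∑ μ ∈ Λ, Nat.card {k // s k = μ} := by
    rw [← Finset.card_range a, Finset.card_eq_sum_card_fiberwise (f := s) (t := Λ)
      fun k hk => (hmem k).2 (by simpa using hk)]
    refine Finset.sum_congr rfl fun μ hμ => (Nat.subtype_card _ fun k => ?_).symm
    simp only [Finset.mem_filter, Finset.mem_range, ← hmem, and_iff_right_iff_imp]
    exact fun h => h ▸ hμ
  rw [hmem, ← hcard]

lemma eq_succ_of_card_fiber_eq_two_of_notMem (hs : Monotone s) {Λ : Finset ℝ}
    (hΛ : ∀ μ ∈ Λ, Nat.card {k // s k = μ} ≠ 0) (hlt : ∀ k, s k ∉ Λ → ∀ μ ∈ Λ, μ < s k)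
    (h2 : ∀ k, s k ∉ Λ → Nat.card {j // s j = s k} = 2) (k : ℕ) :
    s (∑ μ ∈ Λ, Nat.card {k // s k = μ} + 2 * k) =
      s (∑ μ ∈ Λ, Nat.card {k // s k = μ} + 2 * k + 1) := by
  have hmem := mem_iff_lt_sum_card_fiber hs hΛ hlt
  refine eq_succ_of_card_fiber_eq_two hs (fun j hj => ?_) (fun k hk => h2 k ?_) k
  · exact hlt _ (by simp [hmem]) _ ((hmem j).2 hj)
  · rw [hmem]
    omega

end Counting

section Sturm

/-- `f` solves the second order linear equation `f'' = q f`. -/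
structure IsSolution (q f : ℝ → ℝ) : Prop where
  contDiff : ContDiff ℝ 2 f
  deriv_deriv_eq : ∀ x, deriv (deriv f) x = q x * f x

/-- The Wronskian `g' u - g u'` of two functions. -/
def wronskian (g u : ℝ → ℝ) (x : ℝ) : ℝ := deriv g x * u x - g x * deriv u x

variable {p q f g u : ℝ → ℝ} {x y : ℝ}

lemma IsSolution.hasDerivAt (hf : IsSolution q f) (x : ℝ) : HasDerivAt f (deriv f x) x :=
  (hf.contDiff.differentiable (by norm_num) x).hasDerivAt

lemma IsSolution.hasDerivAt_deriv (hf : IsSolution q f) (x : ℝ) :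
    HasDerivAt (deriv f) (q x * f x) x :=
  hf.deriv_deriv_eq x ▸
    ((ContDiff.differentiable_deriv_two hf.contDiff) x).hasDerivAt

lemma IsSolution.eq_zero (hf : IsSolution q f) (hq : Continuous q) (hx : f x = 0)
    (hx' : deriv f x = 0) : f = 0 := by
  ext y
  obtain ⟨a, b, hxab, hyab⟩ : ∃ a b, x ∈ Ioo a b ∧ y ∈ Ioo a b :=
    ⟨min x y - 1, max x y + 1, by grind, by grind⟩
  obtain ⟨K, hK⟩ := isCompact_Icc.exists_bound_of_continuousOn (hq.continuousOn (s := Icc a b))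
  let field : ℝ → ℝ × ℝ → ℝ × ℝ := fun t z => (z.2, q t * z.1)
  have hlip : ∀ t ∈ Ioo a b, LipschitzOnWith (max 1 K.toNNReal) (field t) univ := by
    intro t ht
    have hqt : ‖q t‖₊ * 1 ≤ K.toNNReal := by
      rw [mul_one]
      exact NNReal.le_toNNReal_of_coe_le (hK t (Ioo_subset_Icc_self ht))
    exact ((LipschitzWith.prod_snd.prodMk
      (((lipschitzWith_smul (q t)).comp LipschitzWith.prod_fst))).weaken
        (max_le_max le_rfl hqt)).lipschitzOnWith
  refine congrArg Prod.fst (ODE_solution_unique_of_mem_Ioo hlip hxab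
    (f := fun t => (f t, deriv f t)) (g := fun _ => (0, 0))
    (fun t _ => ⟨(hf.hasDerivAt t).prodMk (hf.hasDerivAt_deriv t), mem_univ _⟩)
    (fun t _ => ⟨?_, mem_univ _⟩) (by simp [hx, hx']) hyab)
  exact (hasDerivAt_const t ((0 : ℝ), (0 : ℝ))).congr_deriv (by ext <;> simp [field])

lemma IsSolution.hasDerivAt_wronskian (hg : IsSolution p g) (hu : IsSolution q u) (x : ℝ) :
    HasDerivAt (wronskian g u) ((p x - q x) * (g x * u x)) x :=
  (((hg.hasDerivAt_deriv x).mul (hu.hasDerivAt x)).sub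
    ((hg.hasDerivAt x).mul (hu.hasDerivAt_deriv x))).congr_deriv (by ring)

lemma IsSolution.hasDerivAt_picone (hg : IsSolution p g) (hu : IsSolution q u) (hx : u x ≠ 0) :
    HasDerivAt (fun z => g z / u z * wronskian g u z)
      ((p x - q x) * g x ^ 2 + (wronskian g u x / u x) ^ 2) x := by
  refine (((hg.hasDerivAt x).div (hu.hasDerivAt x) hx).mul
    (hg.hasDerivAt_wronskian hu x)).congr_deriv ?_
  rw [wronskian, Pi.div_apply]
  field_simp
  ring

lemma IsSolution.tendsto_picone (hg : IsSolution p g) (hu : IsSolution q u) (hq : Continuous q)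
    (hu0 : u ≠ 0) (hy : g y = 0) :
    Tendsto (fun z => g z / u z * wronskian g u z) (𝓝[<] y) (𝓝 0) := by
  have hW := (hg.hasDerivAt_wronskian hu y).continuousAt.tendsto.mono_left
    (nhdsWithin_le_nhds (s := Iio y))
  by_cases huy : u y = 0
  · have huy' : deriv u y ≠ 0 := fun h => hu0 (hu.eq_zero hq huy h)
    have hslope : Tendsto (fun z => slope g y z / slope u y z) (𝓝[<] y)
        (𝓝 (deriv g y / deriv u y)) :=
      ((hasDerivAt_iff_tendsto_slope_left_right.1 (hg.hasDerivAt y)).1).div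
        ((hasDerivAt_iff_tendsto_slope_left_right.1 (hu.hasDerivAt y)).1) huy'
    have hWy : wronskian g u y = 0 := by simp [wronskian, huy, hy]
    rw [hWy] at hW
    refine (mul_zero (deriv g y / deriv u y) ▸ hslope.mul hW).congr' ?_
    filter_upwards [self_mem_nhdsWithin] with z hz
    rw [slope_def_field, slope_def_field, hy, huy, sub_zero, sub_zero,
      div_div_div_cancel_right₀ (sub_ne_zero.2 hz.ne)]
  · have hquot : Tendsto (fun z => g z / u z) (𝓝[<] y) (𝓝 0) := by
      have := ((hg.hasDerivAt y).continuousAt.tendsto.div (hu.hasDerivAt y).continuousAt.tendsto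
        huy).mono_left (nhdsWithin_le_nhds (s := Iio y))
      rwa [hy, zero_div] at this
    simpa using hquot.mul hW

/-- By Picone's identity `(g / u) * wronskian g u` is nondecreasing; it starts at `0` and tends to
`0` at `y`, so the square in its derivative vanishes. -/
lemma IsSolution.wronskian_eq_zero (hg : IsSolution p g) (hu : IsSolution q u)
    (hq : Continuous q) (hqp : ∀ x, q x ≤ p x) (hx : g x = 0) (hy : g y = 0)
    (hne : ∀ z ∈ Ico x y, u z ≠ 0) {z : ℝ} (hz : z ∈ Ioo x y) : wronskian g u z = 0 := by
  set F : ℝ → ℝ := fun z => g z / u z * wronskian g u z with hF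
  have hxx : x ∈ Ico x y := left_mem_Ico.2 (hz.1.trans hz.2)
  have hF' : ∀ z ∈ Ico x y, HasDerivAt F
      ((p z - q z) * g z ^ 2 + (wronskian g u z / u z) ^ 2) z :=
    fun z hz => hg.hasDerivAt_picone hu (hne z hz)
  have hpq : ∀ z, 0 ≤ (p z - q z) * g z ^ 2 :=
    fun z => mul_nonneg (sub_nonneg.2 (hqp z)) (sq_nonneg _)
  have hmono : MonotoneOn F (Ico x y) := monotoneOn_of_deriv_nonneg (convex_Ico x y)
    (fun z hz => (hF' z hz).continuousAt.continuousWithinAt)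
    (fun z hz => (hF' z (interior_subset hz)).differentiableAt.differentiableWithinAt)
    (fun z hz => (hF' z (interior_subset hz)).deriv ▸ add_nonneg (hpq z) (sq_nonneg _))
  have hlim : Tendsto F (𝓝[<] y) (𝓝 0) :=
    hg.tendsto_picone hu hq (fun h => hne x hxx (by simp [h])) hy
  have hF0 : ∀ z ∈ Ico x y, F z = 0 := by
    refine fun z hz => le_antisymm (ge_of_tendsto hlim ?_) ?_
    · filter_upwards [Ico_mem_nhdsLT hz.2] with t ht
      exact hmono hz ⟨hz.1.trans ht.1, ht.2⟩ ht.1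
    · simpa [hF, hx] using hmono hxx hz hz.1
  have hzero := (hF' z (Ioo_subset_Ico_self hz)).unique
    ((hasDerivAt_const z (0 : ℝ)).congr_of_eventuallyEq (eventually_of_mem
      (Ioo_mem_nhds hz.1 hz.2) fun t ht => hF0 t (Ioo_subset_Ico_self ht)))
  simpa [hne z (Ioo_subset_Ico_self hz)] using
    ((add_eq_zero_iff_of_nonneg (hpq z) (sq_nonneg _)).1 hzero).2

lemma IsSolution.sturm_comparison (hg : IsSolution p g) (hu : IsSolution q u)
    (hp : Continuous p) (hq : Continuous q) (hqp : ∀ x, q x ≤ p x) (hg0 : g ≠ 0) (hxy : x < y)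
    (hx : g x = 0) (hy : g y = 0) : ∃ z ∈ Ico x y, u z = 0 := by
  by_contra! hne
  have hWx : wronskian g u x = 0 :=
    tendsto_nhds_unique ((hg.hasDerivAt_wronskian hu x).continuousAt.tendsto.mono_left
      nhdsWithin_le_nhds) (tendsto_const_nhds.congr' (eventually_of_mem (Ioo_mem_nhdsGT hxy)
        fun z hz => (hg.wronskian_eq_zero hu hq hqp hx hy hne hz).symm))
  refine hg0 (hg.eq_zero hp hx ?_)
  simpa [wronskian, hx, hne x (left_mem_Ico.2 hxy)] using hWx

lemma IsSolution.exists_finset_zeros_of_le (hg : IsSolution p g) (hu : IsSolution q u)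
    (hp : Continuous p) (hq : Continuous q) (hqp : ∀ x, q x ≤ p x) (hg0 : g ≠ 0) {c d : ℝ}
    (hd : g d = 0) (s : Finset ℝ) (hs : ∀ x ∈ s, x ∈ Ico c d ∧ g x = 0) :
    ∃ t : Finset ℝ, t.card = s.card ∧ ∀ z ∈ t, z ∈ Ico c d ∧ u z = 0 := by
  induction s using Finset.induction_on_max generalizing d with
  | empty => exact ⟨∅, rfl, by simp⟩
  | insert x s hmax ih =>
    obtain ⟨⟨hcx, hxd⟩, hgx⟩ := hs x (s.mem_insert_self x)
    obtain ⟨t, hcard, ht⟩ := ih hgx fun y hy =>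
      have hy' := hs y (Finset.mem_insert_of_mem hy)
      ⟨⟨hy'.1.1, hmax y hy⟩, hy'.2⟩
    obtain ⟨z, ⟨hxz, hzd⟩, huz⟩ := hg.sturm_comparison hu hp hq hqp hg0 hxd hgx hd
    refine ⟨insert z t, ?_, ?_⟩
    · rw [Finset.card_insert_of_notMem fun h => (ht z h).1.2.not_ge hxz, hcard,
        Finset.card_insert_of_notMem fun h => (hmax x h).false]
    · simp only [Finset.forall_mem_insert]
      exact ⟨⟨⟨hcx.trans hxz, hzd⟩, huz⟩,
        fun y hy => ⟨⟨(ht y hy).1.1, (ht y hy).1.2.trans hxd⟩, (ht y hy).2⟩⟩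

lemma IsSolution.contDiff_infty {q f : ℝ → ℝ} (hf : IsSolution q f) (hq : ContDiff ℝ ∞ q) :
    ContDiff ℝ ∞ f := by
  have hf1 : Differentiable ℝ f := hf.contDiff.differentiable (by simp)
  have hf2 : Differentiable ℝ (deriv f) := hf.contDiff.differentiable_deriv_two
  refine _root_.contDiff_infty.2 fun n => ?_
  induction n with
  | zero => exact contDiff_zero.2 hf1.continuous
  | succ n ih =>
    have hf'' : ContDiff ℝ n (deriv (deriv f)) := by
      rw [funext hf.deriv_deriv_eq]
      exact (_root_.contDiff_infty.1 hq n).mul ih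
    have hf' : ContDiff ℝ (n + 1) (deriv f) := contDiff_succ_iff_deriv.2 ⟨hf2, by simp, hf''⟩
    push_cast
    exact contDiff_succ_iff_deriv.2 ⟨hf1, by simp, hf'.of_le (by simp)⟩

end Sturm

section Smooth

variable {𝕜 𝕜' : Type*} [RCLike 𝕜] [RCLike 𝕜']

variable (𝕜) in
/-- The smooth functions among all functions `ℝ → 𝕜`, from which `Smooth 𝕜` gets its algebra
structure. -/
def smoothFunctions : Subalgebra 𝕜 (ℝ → 𝕜) where
  carrier := {f | ContDiff ℝ ∞ f}
  mul_mem' {f g} (hf : ContDiff ℝ ∞ f) (hg : ContDiff ℝ ∞ g) := hf.mul hg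
  add_mem' {f g} (hf : ContDiff ℝ ∞ f) (hg : ContDiff ℝ ∞ g) := hf.add hg
  algebraMap_mem' c := (contDiff_const : ContDiff ℝ ∞ fun _ : ℝ => c)

variable (𝕜) in
/-- The algebra of smooth `𝕜`-valued functions on the real line, the common domain of the
differential operators. -/
def Smooth : Type _ := smoothFunctions 𝕜

namespace Smooth

instance : CommRing (Smooth 𝕜) := inferInstanceAs (CommRing (smoothFunctions 𝕜))

instance : Algebra 𝕜 (Smooth 𝕜) := inferInstanceAs (Algebra 𝕜 (smoothFunctions 𝕜))

instance : FunLike (Smooth 𝕜) ℝ 𝕜 := ⟨Subtype.val, Subtype.val_injective⟩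

/-- The smooth function given by a function `ℝ → 𝕜` and a proof of its smoothness. -/
def mk (f : ℝ → 𝕜) (hf : ContDiff ℝ ∞ f) : Smooth 𝕜 := ⟨f, hf⟩

section

variable (f g : Smooth 𝕜) (x : ℝ)

@[simp] lemma coe_mk (f : ℝ → 𝕜) (hf : ContDiff ℝ ∞ f) : ⇑(mk f hf) = f := rfl

@[simp] lemma zero_apply : (0 : Smooth 𝕜) x = 0 := rfl

@[simp] lemma one_apply : (1 : Smooth 𝕜) x = 1 := rfl

@[simp] lemma add_apply : (f + g) x = f x + g x := rfl

@[simp] lemma neg_apply : (-f) x = -f x := rfl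

@[simp] lemma sub_apply : (f - g) x = f x - g x := rfl

@[simp] lemma mul_apply : (f * g) x = f x * g x := rfl

@[simp] lemma pow_apply (n : ℕ) : (f ^ n) x = f x ^ n := rfl

@[simp] lemma prod_apply {ι : Type*} (s : Finset ι) (f : ι → Smooth 𝕜) :
    (∏ i ∈ s, f i) x = ∏ i ∈ s, f i x :=
  map_prod ((Pi.evalRingHom _ x).comp (smoothFunctions 𝕜).subtype : Smooth 𝕜 →+* 𝕜) f s

@[simp] lemma smul_apply (c : 𝕜) : (c • f) x = c * f x := rfl

@[simp] lemma algebraMap_apply (c : 𝕜) : algebraMap 𝕜 (Smooth 𝕜) c x = c := rfl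

end

@[ext]
lemma ext {f g : Smooth 𝕜} (h : ∀ x, f x = g x) : f = g := DFunLike.ext f g h

lemma contDiff (f : Smooth 𝕜) : ContDiff ℝ ∞ f := f.2

lemma continuous (f : Smooth 𝕜) : Continuous f := f.contDiff.continuous

lemma differentiable (f : Smooth 𝕜) : Differentiable ℝ f := f.contDiff.differentiable (by simp)

variable (𝕜) in
/-- Differentiation, as a derivation of the algebra of smooth functions. -/
def D : Derivation 𝕜 (Smooth 𝕜) (Smooth 𝕜) :=
  Derivation.mk'
    { toFun := fun f => mk (deriv f) (contDiff_infty_iff_deriv.1 f.contDiff).2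
      map_add' := fun f g => ext fun x => deriv_add (f.differentiable x) (g.differentiable x)
      map_smul' := fun c f => ext fun x => deriv_const_smul c (f.differentiable x) }
    fun f g => ext fun x => (deriv_mul (f.differentiable x) (g.differentiable x)).trans <| by
      simp only [LinearMap.coe_mk, AddHom.coe_mk, smul_eq_mul, add_apply, mul_apply, coe_mk]
      ring

lemma coe_D (f : Smooth 𝕜) : ⇑(D 𝕜 f) = deriv f := rfl

lemma hasDerivAt (f : Smooth 𝕜) (x : ℝ) : HasDerivAt f (D 𝕜 f x) x :=
  (f.differentiable x).hasDerivAt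

lemma D_eq_of_hasDerivAt {f g : Smooth 𝕜} (h : ∀ x, HasDerivAt f (g x) x) : D 𝕜 f = g :=
  ext fun x => (h x).deriv

/-- Postcomposition of a smooth function with a real-linear map, such as complexification or the
real part. -/
def postcomp (ℓ : 𝕜 →L[ℝ] 𝕜') (f : Smooth 𝕜) : Smooth 𝕜' :=
  mk (fun x => ℓ (f x)) (ℓ.contDiff.comp f.contDiff)

@[simp]
lemma postcomp_apply (ℓ : 𝕜 →L[ℝ] 𝕜') (f : Smooth 𝕜) (x : ℝ) : postcomp ℓ f x = ℓ (f x) := rfl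

lemma D_postcomp (ℓ : 𝕜 →L[ℝ] 𝕜') (f : Smooth 𝕜) : D 𝕜' (postcomp ℓ f) = postcomp ℓ (D 𝕜 f) :=
  D_eq_of_hasDerivAt fun x => ℓ.hasFDerivAt.comp_hasDerivAt x (f.hasDerivAt x)

/-- Precomposition of smooth functions with the affine map `x ↦ s * x + t`. -/
def affComp (s t : ℝ) : Smooth 𝕜 →ₐ[𝕜] Smooth 𝕜 where
  toFun f := mk (fun x => f (s * x + t)) (f.contDiff.comp (by fun_prop))
  map_one' := rfl
  map_mul' _ _ := rfl
  map_zero' := rfl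
  map_add' _ _ := rfl
  commutes' _ := rfl

@[simp]
lemma affComp_apply (s t : ℝ) (f : Smooth 𝕜) (x : ℝ) : affComp s t f x = f (s * x + t) := rfl

lemma D_affComp (s t : ℝ) (f : Smooth 𝕜) :
    D 𝕜 (affComp s t f) = (s : 𝕜) • affComp s t (D 𝕜 f) :=
  D_eq_of_hasDerivAt fun x => by
    have h := (f.hasDerivAt (s * x + t)).scomp x (((hasDerivAt_id x).const_mul s).add_const t)
    rw [mul_one, RCLike.real_smul_eq_coe_mul] at h
    exact h

end Smooth

end Smooth

section TrigPoly

open Smooth (D postcomp)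

variable {𝕜 : Type*} [RCLike 𝕜]

variable (𝕜) in
/-- The smooth function `x ↦ cos (s * x + t)`. -/
def Smooth.cos (s t : ℝ) : Smooth 𝕜 :=
  postcomp RCLike.ofRealCLM (.mk (fun x => Real.cos (s * x + t)) (by fun_prop))

variable (𝕜) in
/-- The smooth function `x ↦ sin (s * x + t)`. -/
def Smooth.sin (s t : ℝ) : Smooth 𝕜 :=
  postcomp RCLike.ofRealCLM (.mk (fun x => Real.sin (s * x + t)) (by fun_prop))

/-- The smooth function `x ↦ exp (b * x)`. -/
def Smooth.cexp (b : ℂ) : Smooth ℂ :=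
  .mk (fun x => Complex.exp (b * x)) <| by
    have : ContDiff ℝ ∞ ((↑) : ℝ → ℂ) := Complex.ofRealCLM.contDiff
    fun_prop

@[simp]
lemma Smooth.cos_apply (s t x : ℝ) : Smooth.cos 𝕜 s t x = (Real.cos (s * x + t) : 𝕜) := rfl

@[simp]
lemma Smooth.sin_apply (s t x : ℝ) : Smooth.sin 𝕜 s t x = (Real.sin (s * x + t) : 𝕜) := rfl

lemma Smooth.D_cos (s t : ℝ) : D 𝕜 (Smooth.cos 𝕜 s t) = -(s : 𝕜) • Smooth.sin 𝕜 s t := by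
  rw [Smooth.cos, Smooth.D_postcomp]
  ext x
  simp only [Smooth.postcomp_apply, Smooth.coe_D, Smooth.coe_mk]
  rw [(((hasDerivAt_id' x).const_mul s).add_const t).cos.deriv]
  simp [mul_comm]

lemma Smooth.D_sin (s t : ℝ) : D 𝕜 (Smooth.sin 𝕜 s t) = (s : 𝕜) • Smooth.cos 𝕜 s t := by
  rw [Smooth.sin, Smooth.D_postcomp]
  ext x
  simp only [Smooth.postcomp_apply, Smooth.coe_D, Smooth.coe_mk]
  rw [(((hasDerivAt_id' x).const_mul s).add_const t).sin.deriv]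
  simp [mul_comm]

variable (𝕜) in
/-- The space of homogeneous polynomials of degree `N` in `cos x` and `sin x`, that is, of
trigonometric polynomials with frequencies `-N, -N + 2, …, N`. -/
def trigPoly (N : ℕ) : Submodule 𝕜 (Smooth 𝕜) :=
  Submodule.span 𝕜 {Smooth.cos 𝕜 1 0, Smooth.sin 𝕜 1 0} ^ N

namespace trigPoly

lemma mul_mem {M N : ℕ} {p q : Smooth 𝕜} (hp : p ∈ trigPoly 𝕜 M) (hq : q ∈ trigPoly 𝕜 N) :
    p * q ∈ trigPoly 𝕜 (M + N) := by
  rw [trigPoly, pow_add]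
  exact Submodule.mul_mem_mul hp hq

lemma eq_one_pow (N : ℕ) : trigPoly 𝕜 N = trigPoly 𝕜 1 ^ N := by simp [trigPoly]

lemma cos_mem (t : ℝ) : Smooth.cos 𝕜 1 t ∈ trigPoly 𝕜 1 := by
  rw [trigPoly, pow_one, Submodule.mem_span_pair]
  refine ⟨(Real.cos t : 𝕜), -(Real.sin t : 𝕜), ?_⟩
  ext x
  simp [Real.cos_add]
  ring

lemma sin_mem (t : ℝ) : Smooth.sin 𝕜 1 t ∈ trigPoly 𝕜 1 := by
  rw [trigPoly, pow_one, Submodule.mem_span_pair]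
  refine ⟨(Real.sin t : 𝕜), (Real.cos t : 𝕜), ?_⟩
  ext x
  simp [Real.sin_add]
  ring

lemma le_add_two_mul (N k : ℕ) : trigPoly 𝕜 N ≤ trigPoly 𝕜 (N + 2 * k) := by
  induction k with
  | zero => exact le_rfl
  | succ k ih =>
    refine ih.trans fun q hq => ?_
    have hone : (1 : Smooth 𝕜) ∈ trigPoly 𝕜 (1 + 1) := by
      convert add_mem (mul_mem (cos_mem 0) (cos_mem 0)) (mul_mem (sin_mem (𝕜 := 𝕜) 0) (sin_mem 0))
      ext x
      simpa [sq] using congrArg (fun r : ℝ => (r : 𝕜)) (Real.cos_sq_add_sin_sq x).symm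
    have := mul_mem hq hone
    rwa [mul_one] at this

lemma prod_sin_mem (s : Finset ℝ) :
    ∏ t ∈ s, Smooth.sin 𝕜 1 (-t) ∈ trigPoly 𝕜 s.card := by
  induction s using Finset.cons_induction with
  | empty => simp [trigPoly, Submodule.one_eq_span]
  | cons t s ht ih =>
    rw [Finset.prod_cons, Finset.card_cons, add_comm]
    exact mul_mem (sin_mem _) ih

end trigPoly

lemma add_pow_succ_eq_of_idem {R : Type*} [IdemCommSemiring R] (a b : R) (n : ℕ) :
    (a + b) ^ (n + 1) = a ^ (n + 1) + b * (a + b) ^ n := by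
  induction n with
  | zero => simp
  | succ n ih =>
    calc (a + b) ^ (n + 2) = a * (a + b) ^ (n + 1) + b * (a + b) ^ (n + 1) := by ring
      _ = a ^ (n + 2) + (b * (a * (a + b) ^ n) + b * (a + b) ^ (n + 1)) := by
        nth_rw 1 [ih]
        ring
      _ = _ := by
        congr 1
        rw [pow_succ' (a + b), ← mul_add, ← add_mul, ← add_assoc, add_idem]

namespace trigPoly

lemma one_eq_sup (t : ℝ) :
    trigPoly 𝕜 1 = 𝕜 ∙ Smooth.cos 𝕜 1 t + 𝕜 ∙ Smooth.sin 𝕜 1 t := by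
  rw [Submodule.add_eq_sup, ← Submodule.span_insert]
  apply le_antisymm
  · rw [trigPoly, pow_one, Submodule.span_le, insert_subset_iff, singleton_subset_iff]
    simp only [SetLike.mem_coe, Submodule.mem_span_pair]
    refine ⟨⟨(Real.cos t : 𝕜), (Real.sin t : 𝕜), ?_⟩, -(Real.sin t : 𝕜), (Real.cos t : 𝕜), ?_⟩
    · ext x
      have h := congrArg ((↑) : ℝ → 𝕜) (Real.cos_sub (x + t) t)
      rw [add_sub_cancel_right, RCLike.ofReal_add, RCLike.ofReal_mul, RCLike.ofReal_mul] at h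
      simpa [mul_comm] using h.symm
    · ext x
      have h := congrArg ((↑) : ℝ → 𝕜) (Real.sin_sub (x + t) t)
      rw [add_sub_cancel_right, RCLike.ofReal_sub, RCLike.ofReal_mul, RCLike.ofReal_mul] at h
      simpa [mul_comm, sub_eq_neg_add] using h.symm
  · rw [Submodule.span_le, insert_subset_iff, singleton_subset_iff]
    exact ⟨cos_mem t, sin_mem t⟩

lemma exists_eq_sin_mul {N : ℕ} {q : Smooth 𝕜} (hq : q ∈ trigPoly 𝕜 (N + 1)) {t : ℝ}
    (ht : q t = 0) : ∃ q' ∈ trigPoly 𝕜 N, q = Smooth.sin 𝕜 1 (-t) * q' := by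
  rw [eq_one_pow, one_eq_sup (-t), add_pow_succ_eq_of_idem, ← one_eq_sup, ← eq_one_pow,
    Submodule.add_eq_sup, Submodule.span_pow, Set.singleton_pow, Submodule.mem_sup] at hq
  obtain ⟨y, hy, z, hz, rfl⟩ := hq
  obtain ⟨α, rfl⟩ := Submodule.mem_span_singleton.1 hy
  obtain ⟨q', hq', rfl⟩ := Submodule.mem_span_singleton_mul.1 hz
  have hα : α = 0 := by simpa using ht
  exact ⟨q', hq', by simp [hα]⟩

lemma sin_neg_apply_eq_zero_iff {c x t : ℝ} (hx : x ∈ Ico c (c + π)) (ht : t ∈ Ico c (c + π)) :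
    Smooth.sin 𝕜 1 (-t) x = 0 ↔ x = t := by
  rw [Smooth.sin_apply, RCLike.ofReal_eq_zero, one_mul, ← sub_eq_add_neg,
    Real.sin_eq_zero_iff_of_lt_of_lt (by linarith [hx.1, ht.2]) (by linarith [hx.2, ht.1]),
    sub_eq_zero]

lemma card_zeros_le {N : ℕ} {q : Smooth 𝕜} (hq : q ∈ trigPoly 𝕜 N) (hq0 : q ≠ 0) {c : ℝ}
    {s : Finset ℝ} (hs : ∀ x ∈ s, x ∈ Ico c (c + π) ∧ q x = 0) : s.card ≤ N := by
  induction N generalizing q s with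
  | zero =>
    rw [trigPoly, pow_zero, Submodule.mem_one] at hq
    obtain ⟨r, rfl⟩ := hq
    refine (Finset.card_eq_zero.2 (Finset.eq_empty_of_forall_notMem fun x hx => hq0 ?_)).le
    have hr : r = 0 := (hs x hx).2
    rw [hr, map_zero]
  | succ N ih =>
    rcases s.eq_empty_or_nonempty with rfl | ⟨t, ht⟩
    · simp
    obtain ⟨q', hq', rfl⟩ := exists_eq_sin_mul hq (hs t ht).2
    rw [← Finset.card_erase_add_one ht]
    refine Nat.succ_le_succ (ih hq' (right_ne_zero_of_mul hq0) fun x hx => ?_)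
    obtain ⟨hne, hxs⟩ := Finset.mem_erase.1 hx
    refine ⟨(hs x hxs).1, (mul_eq_zero.1 (hs x hxs).2).resolve_left fun h => hne ?_⟩
    exact (sin_neg_apply_eq_zero_iff (hs x hxs).1 (hs t ht).1).1 h

lemma prod_sin_apply_eq_zero_iff {s : Finset ℝ} {c x : ℝ} (hs : ∀ t ∈ s, t ∈ Ico c (c + π))
    (hx : x ∈ Ico c (c + π)) : (∏ t ∈ s, Smooth.sin 𝕜 1 (-t)) x = 0 ↔ x ∈ s := by
  rw [Smooth.prod_apply, Finset.prod_eq_zero_iff]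
  constructor
  · rintro ⟨t, ht, h⟩
    rwa [(sin_neg_apply_eq_zero_iff hx (hs t ht)).1 h]
  · exact fun hxs => ⟨x, hxs, (sin_neg_apply_eq_zero_iff hx hx).2 rfl⟩

lemma finrank_eq (N : ℕ) : Module.finrank 𝕜 (trigPoly 𝕜 N) = N + 1 := by
  obtain ⟨s, hs, hcard⟩ := (Ico_infinite pi_pos).exists_subset_card_eq (N + 1)
  have hs' : ∀ x ∈ s, x ∈ Ico 0 (0 + π) := fun x hx => by simpa using hs hx
  let eval : trigPoly 𝕜 N →ₗ[𝕜] (s → 𝕜) :=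
    { toFun q t := (q : Smooth 𝕜) t
      map_add' _ _ := rfl
      map_smul' _ _ := rfl }
  have hinj : ∀ q, eval q = 0 → q = 0 := fun q hq => by
    by_contra hq0
    have := card_zeros_le q.2 (by simpa using hq0) fun x hx => ⟨hs' x hx, congrFun hq ⟨x, hx⟩⟩
    omega
  have hsurj : Function.Surjective eval := by
    rw [← LinearMap.range_eq_top, eq_top_iff, ← (Pi.basisFun 𝕜 s).span_eq, Submodule.span_le]
    rintro _ ⟨t, rfl⟩
    let p : Smooth 𝕜 := ∏ t' ∈ s.erase t, Smooth.sin 𝕜 1 (-t')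
    have hp : p ∈ trigPoly 𝕜 N := by
      have := prod_sin_mem (𝕜 := 𝕜) (s.erase t)
      rwa [Finset.card_erase_of_mem t.2, hcard, Nat.add_sub_cancel] at this
    have hzero : ∀ x ∈ s, p x = 0 ↔ x ≠ t := fun x hx => by
      rw [prod_sin_apply_eq_zero_iff (c := 0) (fun t ht => hs' t (Finset.mem_of_mem_erase ht))
        (hs' x hx), Finset.mem_erase, and_iff_left hx]
    have hpt : p t ≠ 0 := fun h => (hzero t t.2).1 h rfl
    refine ⟨(p t)⁻¹ • ⟨p, hp⟩, funext fun x => ?_⟩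
    change (p t)⁻¹ * p x = _
    rcases eq_or_ne x t with rfl | hxt
    · simp [hpt]
    · have := (hzero x x.2).2 (Subtype.coe_ne_coe.2 hxt)
      simp [this, Pi.single_eq_of_ne hxt]
  rw [(LinearEquiv.ofBijective eval ⟨LinearMap.ker_eq_bot.1 (LinearMap.ker_eq_bot'.2 hinj),
    hsurj⟩).finrank_eq, Module.finrank_fintype_fun_eq_card, Fintype.card_coe, hcard]

lemma mem_one_iff {q : Smooth 𝕜} :
    q ∈ trigPoly 𝕜 1 ↔ ∃ α β : 𝕜, α • Smooth.cos 𝕜 1 0 + β • Smooth.sin 𝕜 1 0 = q := by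
  rw [trigPoly, pow_one, Submodule.mem_span_pair]

@[elab_as_elim]
lemma induction_on {C : ℕ → Smooth 𝕜 → Prop} (const : ∀ r, C 0 (algebraMap 𝕜 _ r))
    (add : ∀ N p q, C N p → C N q → C N (p + q))
    (mul : ∀ N m q, m ∈ trigPoly 𝕜 1 → q ∈ trigPoly 𝕜 N → C N q → C (N + 1) (m * q))
    {N : ℕ} {q : Smooth 𝕜} (hq : q ∈ trigPoly 𝕜 N) : C N q := by
  rw [eq_one_pow] at hq
  exact Submodule.pow_induction_on_left' _ (C := fun N q _ => C N q) const
    (fun p q _ _ _ => add _ p q) (fun m hm N q hq => mul N m q hm (by rwa [eq_one_pow])) hq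

lemma postcomp_mem {N : ℕ} {q : Smooth 𝕜} (hq : q ∈ trigPoly 𝕜 N) :
    ∀ ℓ : 𝕜 →L[ℝ] ℝ, postcomp ℓ q ∈ trigPoly ℝ N := by
  refine induction_on (fun r ℓ => ?_) (fun N p q hp hq ℓ => ?_) (fun N m q hm _ ih ℓ => ?_) hq
  · simpa [trigPoly, Submodule.mem_one] using ⟨ℓ r, rfl⟩
  · convert add_mem (hp ℓ) (hq ℓ)
    ext x
    exact map_add ℓ _ _
  · obtain ⟨α, β, rfl⟩ := mem_one_iff.1 hm
    have hmul : ∀ c : 𝕜, postcomp (ℓ ∘L ContinuousLinearMap.mul ℝ 𝕜 c) q ∈ trigPoly ℝ N :=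
      fun c => ih _
    rw [add_comm N 1]
    convert add_mem (mul_mem (cos_mem 0) (hmul α)) (mul_mem (sin_mem 0) (hmul β))
    ext x
    have hreal : ∀ (c : 𝕜) (r : ℝ), ℓ (c * (r * q x)) = r * ℓ (c * q x) := fun c r => by
      rw [← smul_eq_mul r, ← map_smul, RCLike.real_smul_eq_coe_mul, mul_left_comm]
    simp [add_mul, hreal]

lemma D_mem {N : ℕ} {q : Smooth 𝕜} (hq : q ∈ trigPoly 𝕜 N) : D 𝕜 q ∈ trigPoly 𝕜 N := by
  refine induction_on (fun r => ?_) (fun N p q hp hq => ?_) (fun N m q hm hq ih => ?_) hq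
  · simp
  · rw [map_add]
    exact add_mem hp hq
  · have hDm : D 𝕜 m ∈ trigPoly 𝕜 1 := by
      obtain ⟨α, β, rfl⟩ := mem_one_iff.1 hm
      rw [map_add, (D 𝕜).map_smul, (D 𝕜).map_smul, Smooth.D_cos, Smooth.D_sin]
      exact add_mem (Submodule.smul_mem _ _ (Submodule.smul_mem _ _ (sin_mem 0)))
        (Submodule.smul_mem _ _ (Submodule.smul_mem _ _ (cos_mem 0)))
    rw [Derivation.leibniz, smul_eq_mul, smul_eq_mul, add_comm N 1]
    refine add_mem (mul_mem hm ih) ?_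
    rw [mul_comm]
    exact mul_mem hDm hq

lemma sin_two_mul_D_sub_mem {N : ℕ} {q : Smooth 𝕜} (hq : q ∈ trigPoly 𝕜 N) :
    Smooth.sin 𝕜 2 0 * D 𝕜 q - (N : 𝕜) • (Smooth.cos 𝕜 2 0 * q) ∈ trigPoly 𝕜 N := by
  refine induction_on (C := fun N q =>
    Smooth.sin 𝕜 2 0 * D 𝕜 q - (N : 𝕜) • (Smooth.cos 𝕜 2 0 * q) ∈ trigPoly 𝕜 N)
    (fun r => ?_) (fun N p q hp hq => ?_) (fun N m q hm hq ih => ?_) hq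
  · simp
  · rw [map_add]
    convert add_mem hp hq using 1
    rw [mul_add, mul_add, smul_add]
    abel
  · have hm' : Smooth.sin 𝕜 2 0 * D 𝕜 m - Smooth.cos 𝕜 2 0 * m ∈ trigPoly 𝕜 1 := by
      obtain ⟨α, β, rfl⟩ := mem_one_iff.1 hm
      refine mem_one_iff.2 ⟨-α, β, ?_⟩
      rw [map_add, (D 𝕜).map_smul, (D 𝕜).map_smul, Smooth.D_cos, Smooth.D_sin]
      ext x
      have hsin : (Real.sin (2 * x) : 𝕜) = 2 * Real.sin x * Real.cos x :=
        mod_cast Real.sin_two_mul x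
      have hcos : (Real.cos (2 * x) : 𝕜) = (Real.cos x : 𝕜) ^ 2 - (Real.sin x : 𝕜) ^ 2 :=
        mod_cast Real.cos_two_mul' x
      have h : (Real.sin x : 𝕜) ^ 2 + (Real.cos x : 𝕜) ^ 2 = 1 :=
        mod_cast Real.sin_sq_add_cos_sq x
      simp only [Smooth.add_apply, Smooth.smul_apply, Smooth.cos_apply, one_mul, add_zero,
        Smooth.sin_apply, Smooth.sub_apply, Smooth.mul_apply, RCLike.ofReal_one, one_smul,
        neg_smul, Smooth.neg_apply, hsin, hcos]
      linear_combination (α * Real.cos x - β * Real.sin x) * h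
    rw [add_comm N 1]
    convert add_mem (mul_mem hm ih) (mul_mem hm' hq) using 1
    simp only [Derivation.leibniz, smul_eq_mul, Nat.cast_add, Nat.cast_one, Algebra.smul_def,
      map_add, map_one]
    ring

lemma cexp_mem (j k : ℕ) : Smooth.cexp (((j : ℂ) - k) * Complex.I) ∈ trigPoly ℂ (j + k) := by
  have hI : ∀ ε : ℂ, ε = 1 ∨ ε = -1 → Smooth.cexp (ε * Complex.I) ∈ trigPoly ℂ 1 := fun ε hε =>
    mem_one_iff.2 ⟨1, ε * Complex.I, by
      ext x
      simp only [Smooth.cexp, Smooth.coe_mk, mul_right_comm _ Complex.I, Complex.exp_mul_I]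
      rcases hε with rfl | rfl <;> simp [mul_comm]⟩
  rw [eq_one_pow, pow_add]
  convert Submodule.mul_mem_mul (Submodule.pow_mem_pow _ (hI 1 (.inl rfl)) j)
    (Submodule.pow_mem_pow _ (hI (-1) (.inr rfl)) k)
  ext x
  simp only [Smooth.cexp, Smooth.coe_mk, Smooth.mul_apply, Smooth.pow_apply,
    ← Complex.exp_nat_mul, ← Complex.exp_add]
  ring_nf

end trigPoly

end TrigPoly

section Sign

open Smooth (D)

lemma nonneg_or_nonpos_of_eventually {F : ℝ → ℝ} (hF : Continuous F)
    (h : ∀ x, (∀ᶠ y in 𝓝[≠] x, 0 < F y) ∨ ∀ᶠ y in 𝓝[≠] x, F y < 0) :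
    (∀ x, 0 ≤ F x) ∨ ∀ x, F x ≤ 0 := by
  let U : Set ℝ := {x | ∀ᶠ y in 𝓝 x, 0 ≤ F y}
  let V : Set ℝ := {x | ∀ᶠ y in 𝓝 x, F y ≤ 0}
  have hU : IsOpen U := isOpen_iff_mem_nhds.2 fun x hx => eventually_eventually_nhds.2 hx
  have hV : IsOpen V := isOpen_iff_mem_nhds.2 fun x hx => eventually_eventually_nhds.2 hx
  have hext : ∀ G : ℝ → ℝ, Continuous G →
      ∀ x, (∀ᶠ y in 𝓝[≠] x, 0 < G y) → ∀ᶠ y in 𝓝 x, 0 ≤ G y :=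
    fun G hG x hx => by
      have hGx : 0 ≤ G x := ge_of_tendsto (hG.continuousWithinAt (s := {x}ᶜ))
        (hx.mono fun _ => le_of_lt)
      filter_upwards [eventually_nhdsWithin_iff.1 hx] with y hy
      rcases eq_or_ne y x with rfl | hyx
      exacts [hGx, (hy hyx).le]
  have hUV : univ ⊆ U ∪ V := fun x _ => (h x).imp (hext F hF x) fun hx => by
    have := hext (-F) hF.neg x (by simpa using hx)
    exact this.mono fun y => by simp
  have hdisj : Disjoint U V := disjoint_left.2 fun x hxU hxV => by
    have h0 : ∀ᶠ y in 𝓝[≠] x, F y = 0 := nhdsWithin_le_nhds <| by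
      filter_upwards [hxU, hxV] with y h₁ h₂ using le_antisymm h₂ h₁
    rcases h x with hx | hx
    · obtain ⟨y, h₁, h₂⟩ := (h0.and hx).exists
      exact h₂.ne' h₁
    · obtain ⟨y, h₁, h₂⟩ := (h0.and hx).exists
      exact h₂.ne h₁
  rcases isPreconnected_univ.subset_or_subset hU hV hdisj hUV with h | h
  · exact .inl fun x => (h (mem_univ x)).self_of_nhds
  · exact .inr fun x => (h (mem_univ x)).self_of_nhds

lemma eventually_mul_pos_or_neg {g q : ℝ → ℝ} {g' q' x : ℝ} (hg : HasDerivAt g g' x)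
    (hq : HasDerivAt q q' x) (hgq : g x = 0 ↔ q x = 0) (hg' : g x = 0 → g' ≠ 0)
    (hq' : q x = 0 → q' ≠ 0) :
    (∀ᶠ y in 𝓝[≠] x, 0 < g y * q y) ∨ ∀ᶠ y in 𝓝[≠] x, g y * q y < 0 := by
  by_cases hx : g x = 0
  · have hlim := (hasDerivAt_iff_tendsto_slope.1 hg).mul (hasDerivAt_iff_tendsto_slope.1 hq)
    have heq : ∀ᶠ y in 𝓝[≠] x, g y * q y = (y - x) ^ 2 * (slope g x y * slope q x y) := by
      filter_upwards [self_mem_nhdsWithin] with y hy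
      have : y - x ≠ 0 := sub_ne_zero.2 hy
      rw [slope_def_field, slope_def_field, hx, hgq.1 hx]
      field_simp
      ring
    rcases (mul_ne_zero (hg' hx) (hq' (hgq.1 hx))).lt_or_gt with h | h
    · right
      filter_upwards [heq, hlim.eventually_lt_const h, self_mem_nhdsWithin] with y h₁ h₂ h₃
      rw [h₁]
      exact mul_neg_of_pos_of_neg (pow_two_pos_of_ne_zero (sub_ne_zero.2 h₃)) h₂
    · left
      filter_upwards [heq, hlim.eventually_const_lt h, self_mem_nhdsWithin] with y h₁ h₂ h₃
      rw [h₁]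
      exact mul_pos (pow_two_pos_of_ne_zero (sub_ne_zero.2 h₃)) h₂
  · have hlim : Tendsto (fun y => g y * q y) (𝓝[≠] x) (𝓝 (g x * q x)) :=
      (hg.continuousAt.mul hq.continuousAt).tendsto.mono_left nhdsWithin_le_nhds
    rcases (mul_ne_zero hx (hgq.not.1 hx)).lt_or_gt with h | h
    · exact .inr (hlim.eventually_lt_const h)
    · exact .inl (hlim.eventually_const_lt h)

/-- The smooth functions with `f (x + π) = (-1) ^ N * f x`: the periodic ones for even `N` and the
semi-periodic ones for odd `N`. -/
def floquet (N : ℕ) : Submodule ℝ (Smooth ℝ) where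
  carrier := {f | ∀ x, f (x + π) = (-1) ^ N * f x}
  add_mem' {f g} hf hg x := by
    rw [Smooth.add_apply, Smooth.add_apply, hf, hg, mul_add]
  zero_mem' x := by simp
  smul_mem' c f hf x := by
    rw [Smooth.smul_apply, Smooth.smul_apply, hf, mul_left_comm]

namespace floquet

variable {N : ℕ} {f : Smooth ℝ}

lemma D_mem (hf : f ∈ floquet N) : D ℝ f ∈ floquet N := fun x => by
  have h : (fun y => f (y + π)) = fun y => (-1) ^ N * f y := funext hf
  have h' := congrArg (deriv · x) h
  simpa [deriv_comp_add_const, Smooth.coe_D] using h'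

lemma mul_mem {M : ℕ} {g : Smooth ℝ} (hf : f ∈ floquet M) (hg : g ∈ floquet N) :
    f * g ∈ floquet (M + N) := fun x => by
  rw [Smooth.mul_apply, Smooth.mul_apply, hf, hg, pow_add]
  ring

lemma apply_add_pi_eq_zero_iff (hf : f ∈ floquet N) {x : ℝ} : f (x + π) = 0 ↔ f x = 0 := by
  rw [hf x, mul_eq_zero, or_iff_right (pow_ne_zero N (by norm_num))]

lemma even_of_nonneg_or_nonpos (hf : f ∈ floquet N) (hsign : (∀ x, 0 ≤ f x) ∨ ∀ x, f x ≤ 0)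
    (hf0 : ∃ x, f x ≠ 0) : Even N := by
  obtain ⟨x, hx⟩ := hf0
  by_contra hN
  have hπ := hf x
  rw [(Nat.not_even_iff_odd.1 hN).neg_one_pow, neg_one_mul] at hπ
  rcases hsign with h | h <;> have := h x <;> have := h (x + π) <;> exact hx (by linarith)

end floquet

lemma trigPoly_le_floquet (N : ℕ) : trigPoly ℝ N ≤ floquet N := fun q hq => by
  refine trigPoly.induction_on (C := fun N q => q ∈ floquet N) (fun r x => ?_)
    (fun N p q hp hq => add_mem hp hq) (fun N m q hm _ ih => ?_) hq
  · simp
  · rw [add_comm]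
    refine floquet.mul_mem (fun x => ?_) ih
    obtain ⟨α, β, rfl⟩ := trigPoly.mem_one_iff.1 hm
    simp [add_comm]

lemma trigPoly.D_prod_sin_ne_zero {s : Finset ℝ} {c x : ℝ} (hs : ∀ t ∈ s, t ∈ Ico c (c + π))
    (hx : x ∈ s) : D ℝ (∏ t ∈ s, Smooth.sin ℝ 1 (-t)) x ≠ 0 := by
  have hne := (trigPoly.prod_sin_apply_eq_zero_iff (𝕜 := ℝ) (s := s.erase x)
    (fun t ht => hs t (Finset.mem_of_mem_erase ht)) (hs x hx)).not.2 (Finset.notMem_erase x s)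
  rw [← Finset.mul_prod_erase s _ hx, Derivation.leibniz, Smooth.D_sin]
  simpa using hne

theorem exists_trigPoly_mul_nonneg {N : ℕ} {g : Smooth ℝ} (hg : g ∈ floquet N)
    (hsimple : ∀ x, g x = 0 → D ℝ g x ≠ 0) {c : ℝ}
    (hcard : ∀ s : Finset ℝ, (∀ x ∈ s, x ∈ Ico c (c + π) ∧ g x = 0) → s.card ≤ N) :
    ∃ q ∈ trigPoly ℝ N, (∀ x, 0 ≤ (g * q) x) ∧ ∃ x, (g * q) x ≠ 0 := by
  have hfin : {x | x ∈ Ico c (c + π) ∧ g x = 0}.Finite := by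
    by_contra hinf
    obtain ⟨s, hs, hsN⟩ := Set.Infinite.exists_subset_card_eq hinf (N + 1)
    exact absurd (hcard s fun x hx => hs hx) (by omega)
  obtain ⟨s, hs⟩ := hfin.exists_finset
  have hsI : ∀ x ∈ s, x ∈ Ico c (c + π) := fun x hx => ((hs x).1 hx).1
  let q := ∏ t ∈ s, Smooth.sin ℝ 1 (-t)
  have hq : q ∈ trigPoly ℝ s.card := trigPoly.prod_sin_mem s
  have hqf := trigPoly_le_floquet _ hq
  have hzeros : ∀ x, (g x = 0 ↔ q x = 0) ∧ (q x = 0 → D ℝ q x ≠ 0) := fun x => by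
    have hper : Function.Periodic
        (fun x => (g x = 0 ↔ q x = 0) ∧ (q x = 0 → D ℝ q x ≠ 0)) π := fun x => by
      simp only [ne_eq, floquet.apply_add_pi_eq_zero_iff hg,
        floquet.apply_add_pi_eq_zero_iff hqf, floquet.apply_add_pi_eq_zero_iff (floquet.D_mem hqf)]
    obtain ⟨y, hy, hxy⟩ := hper.exists_mem_Ico pi_pos x c
    have hqy : q y = 0 ↔ y ∈ s := trigPoly.prod_sin_apply_eq_zero_iff hsI hy
    rw [hxy, hqy, hs y, mem_ofPred_eq, and_iff_right hy]
    exact ⟨Iff.rfl, fun h => trigPoly.D_prod_sin_ne_zero hsI ((hs y).2 ⟨hy, h⟩)⟩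
  have hlocal : ∀ x, (∀ᶠ y in 𝓝[≠] x, 0 < (g * q) y) ∨ ∀ᶠ y in 𝓝[≠] x, (g * q) y < 0 :=
    fun x => eventually_mul_pos_or_neg (g.hasDerivAt x) (q.hasDerivAt x) (hzeros x).1 (hsimple x)
      (hzeros x).2
  have hsign := nonneg_or_nonpos_of_eventually (g * q).continuous hlocal
  have hne : ∃ x, (g * q) x ≠ 0 := (hlocal 0).elim
    (fun h => h.exists.imp fun _ => ne_of_gt) fun h => h.exists.imp fun _ => ne_of_lt
  have hparity := floquet.even_of_nonneg_or_nonpos (floquet.mul_mem hg hqf) hsign hne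
  obtain ⟨k, rfl⟩ : ∃ k, N = s.card + 2 * k := by
    have := hcard s fun x hx => (hs x).1 hx
    obtain ⟨r, hr⟩ := hparity
    exact ⟨r - s.card, by omega⟩
  have hqN := trigPoly.le_add_two_mul _ k hq
  rcases hsign with h | h
  · exact ⟨q, hqN, h, hne⟩
  · exact ⟨-q, neg_mem hqN, by simpa using h, by simpa using hne⟩

end Sign

section Symmetric

open Module Module.End

variable {𝕜 E : Type*} [RCLike 𝕜] [NormedAddCommGroup E] [InnerProductSpace 𝕜 E]
  {T : Module.End 𝕜 E} {V : Submodule 𝕜 E}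

lemma starProjection_mem_eigenspace [V.HasOrthogonalProjection]
    (hT : LinearMap.IsSymmetric T) (hV : V ∈ T.invtSubmodule)
    {μ : 𝕜} {f : E} (hf : f ∈ eigenspace T μ) :
    V.starProjection f ∈ eigenspace T μ := by
  rw [mem_eigenspace_iff] at hf ⊢
  have hmem : T (V.starProjection f) ∈ V := hV (V.starProjection_apply_mem f)
  rw [← ContinuousLinearMap.map_smul, ← hf]
  refine (Submodule.eq_starProjection_of_mem_orthogonal hmem ?_).symm
  rw [← map_sub]
  exact hT.orthogonalComplement_mem_invtSubmodule hV (V.sub_starProjection_mem_orthogonal f)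

lemma eigenspace_le_orthogonal [V.HasOrthogonalProjection]
    (hT : LinearMap.IsSymmetric T) (hV : V ∈ T.invtSubmodule)
    {μ : 𝕜} (h : Disjoint (eigenspace T μ) V) :
    eigenspace T μ ≤ Vᗮ := fun f hf => by
  rw [← Submodule.starProjection_apply_eq_zero_iff]
  exact Submodule.disjoint_def.1 h _ (starProjection_mem_eigenspace hT hV hf)
    (V.starProjection_apply_mem f)

lemma eigenspace_le_of_disjoint_orthogonal [V.HasOrthogonalProjection]
    (hT : LinearMap.IsSymmetric T) (hV : V ∈ T.invtSubmodule)
    {μ : 𝕜} (h : Disjoint (eigenspace T μ) Vᗮ) :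
    eigenspace T μ ≤ V := fun f hf => by
  have := Submodule.disjoint_def.1 h _ (sub_mem hf (starProjection_mem_eigenspace hT hV hf))
    (V.sub_starProjection_mem_orthogonal f)
  rw [sub_eq_zero.1 this]
  exact V.starProjection_apply_mem f

lemma finrank_eigenspace_restrict (hV : ∀ v ∈ V, T v ∈ V) {μ : 𝕜} (h : eigenspace T μ ≤ V) :
    finrank 𝕜 (eigenspace (T.restrict hV) μ) = finrank 𝕜 (eigenspace T μ) := by
  rw [eigenspace, genEigenspace_restrict]
  exact (Submodule.comapSubtypeEquivOfLe h).finrank_eq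

theorem sum_finrank_eigenspace [FiniteDimensional 𝕜 V] (hT : LinearMap.IsSymmetric T)
    (hV : V ∈ T.invtSubmodule)
    (hle : ∀ μ, ¬ Disjoint (eigenspace T μ) V → eigenspace T μ ≤ V) :
    ∃ Λ : Finset 𝕜, (∑ μ ∈ Λ, finrank 𝕜 (eigenspace T μ) = finrank 𝕜 V) ∧
      ∀ μ, μ ∈ Λ ↔ ¬ Disjoint (eigenspace T μ) V := by
  let T' : Module.End 𝕜 V := T.restrict hV
  have hmem : ∀ μ, T'.HasEigenvalue μ ↔ ¬ Disjoint (eigenspace T μ) V := fun μ => by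
    rw [hasEigenvalue_iff, not_iff_not]
    refine ⟨fun h => Submodule.disjoint_def.2 fun f hf hfV => ?_, eigenspace_restrict_eq_bot hV⟩
    have : (⟨f, hfV⟩ : V) ∈ eigenspace T' μ :=
      mem_eigenspace_iff.2 (Subtype.ext (mem_eigenspace_iff.1 hf))
    simpa [h] using this
  let ι : T'.Eigenvalues ↪ 𝕜 := .subtype T'.HasEigenvalue
  refine ⟨Finset.univ.map ι, ?_, fun μ => ?_⟩
  · have hT' : LinearMap.IsSymmetric T' := hT.restrict_invariant hV
    have hdecomp := LinearEquiv.ofBijective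
      (DirectSum.coeLinearMap fun μ : T'.Eigenvalues => eigenspace T' μ) hT'.direct_sum_isInternal
    rw [Finset.sum_map, ← hdecomp.finrank_eq, finrank_directSum]
    exact Finset.sum_congr rfl fun μ _ =>
      (finrank_eigenspace_restrict hV (hle μ ((hmem μ).1 μ.2))).symm
  · rw [← hmem, Finset.mem_map]
    exact ⟨fun ⟨ν, _, h⟩ => h ▸ ν.2, fun h => ⟨⟨μ, h⟩, Finset.mem_univ _, rfl⟩⟩

end Symmetric

section Hill

open Smooth (D affComp)

open Module Module.End

/-- The Schrödinger operator `f ↦ -f'' + v * f` on smooth functions. -/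
def schrodinger (v : Smooth ℝ) : Module.End ℝ (Smooth ℝ) :=
  LinearMap.mulLeft ℝ v - (D ℝ).toLinearMap ∘ₗ (D ℝ).toLinearMap

@[simp]
lemma schrodinger_apply (v f : Smooth ℝ) : schrodinger v f = v * f - D ℝ (D ℝ f) := rfl

lemma schrodinger_affComp_neg_one {v : Smooth ℝ} (hv : affComp (-1) 0 v = v) (f : Smooth ℝ) :
    schrodinger v (affComp (-1) 0 f) = affComp (-1) 0 (schrodinger v f) := by
  rw [schrodinger_apply, schrodinger_apply, map_sub, map_mul, hv, Smooth.D_affComp,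
    (D ℝ).map_smul, Smooth.D_affComp, smul_smul]
  norm_num

lemma isSolution_of_schrodinger_eq {v f : Smooth ℝ} {μ : ℝ} (h : schrodinger v f = μ • f) :
    IsSolution (fun x => v x - μ) f where
  contDiff := contDiff_infty.1 f.contDiff 2
  deriv_deriv_eq x := by
    have := DFunLike.congr_fun h x
    simp only [schrodinger_apply, Smooth.sub_apply, Smooth.mul_apply, Smooth.coe_D,
      Smooth.smul_apply] at this
    linarith

namespace floquet

variable {N : ℕ}

lemma affComp_neg_one_mem {f : Smooth ℝ} (hf : f ∈ floquet N) : affComp (-1) 0 f ∈ floquet N :=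
  fun x => by
    have h := hf (-x - π)
    rw [sub_add_cancel] at h
    rw [Smooth.affComp_apply, Smooth.affComp_apply, neg_one_mul, neg_one_mul, neg_add, add_zero,
      add_zero, ← sub_eq_add_neg, h, ← mul_assoc, ← mul_pow, neg_one_mul, neg_neg, one_pow, one_mul]

lemma intervalIntegral_pos {M : ℕ} {f : Smooth ℝ} (hf : f ∈ floquet M) (hnonneg : ∀ x, 0 ≤ f x)
    (hne : ∃ x, f x ≠ 0) : 0 < ∫ x in 0..π, f x := by
  obtain ⟨x, hx⟩ := hne
  have hper : Function.Periodic (fun x => f x = 0) π := fun x => by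
    simp only [apply_add_pi_eq_zero_iff hf]
  obtain ⟨y, hy, hxy⟩ := hper.exists_mem_Ico₀ pi_pos x
  refine intervalIntegral.integral_pos pi_pos f.continuous.continuousOn (fun x _ => hnonneg x)
    ⟨y, Ico_subset_Icc_self hy, (hnonneg y).lt_of_ne' ?_⟩
  exact fun h => hx (hxy.mpr h)

/-- The `L²` inner product over one period, as a core. -/
abbrev innerCore : InnerProductSpace.Core ℝ (floquet N) where
  inner f g := ∫ x in 0..π, (f : Smooth ℝ) x * (g : Smooth ℝ) x
  conj_inner_symm f g := by simp [mul_comm]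
  re_inner_nonneg f :=
    intervalIntegral.integral_nonneg pi_pos.le fun x _ => mul_self_nonneg _
  add_left f g h := by
    rw [← intervalIntegral.integral_add]
    · exact intervalIntegral.integral_congr fun x _ => add_mul _ _ _
    · exact (f.1 * h.1).continuous.intervalIntegrable _ _
    · exact (g.1 * h.1).continuous.intervalIntegrable _ _
  smul_left f g r := by
    rw [conj_trivial, ← intervalIntegral.integral_const_mul]
    exact intervalIntegral.integral_congr fun x _ => mul_assoc _ _ _
  definite f hf := by
    by_contra hne
    refine (intervalIntegral_pos (mul_mem f.2 f.2) (fun x => mul_self_nonneg _) ?_).ne' hf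
    by_contra! h
    exact hne (Subtype.ext (Smooth.ext fun x => mul_self_eq_zero.1 (h x)))

instance : NormedAddCommGroup (floquet N) := innerCore.toNormedAddCommGroup

instance : InnerProductSpace ℝ (floquet N) := .ofCore innerCore.toCore

lemma inner_def (f g : floquet N) :
    inner ℝ f g = ∫ x in 0..π, (f : Smooth ℝ) x * (g : Smooth ℝ) x := rfl

end floquet

/-- The Hill operator with `π`-periodic potential `v`, on the periodic (even `N`) or semi-periodic
(odd `N`) smooth functions. -/
def hill (N : ℕ) (v : floquet 0) : Module.End ℝ (floquet N) :=
  (schrodinger v).restrict fun f hf => sub_mem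
    (by simpa using floquet.mul_mem v.2 hf) (floquet.D_mem (floquet.D_mem hf))

variable {N : ℕ} {v : floquet 0} {μ : ℝ}

lemma mem_eigenspace_hill {f : floquet N} :
    f ∈ eigenspace (hill N v) μ ↔ schrodinger v f = μ • (f : Smooth ℝ) := by
  rw [mem_eigenspace_iff, Subtype.ext_iff]
  rfl

lemma hill_isSymmetric : LinearMap.IsSymmetric (hill N v) := fun f g => by
  let W : Smooth ℝ := f * D ℝ g - D ℝ f * g
  have hW : W ∈ floquet (N + N) :=
    sub_mem (floquet.mul_mem f.2 (floquet.D_mem g.2)) (floquet.mul_mem (floquet.D_mem f.2) g.2)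
  have hD : D ℝ W = schrodinger v f * g - f * schrodinger v g := by
    simp only [W, map_sub, Derivation.leibniz, schrodinger_apply, smul_eq_mul]
    ring
  have hint : ∫ x in 0..π, D ℝ W x = W π - W 0 :=
    intervalIntegral.integral_eq_sub_of_hasDerivAt (fun x _ => W.hasDerivAt x)
      ((D ℝ W).continuous.intervalIntegrable _ _)
  rw [floquet.inner_def, floquet.inner_def, ← sub_eq_zero, ← intervalIntegral.integral_sub]
  · have hπ : W π = W 0 := by simpa using hW 0
    rw [hπ, sub_self, hD] at hint
    exact hint
  · exact (schrodinger v f * g : Smooth ℝ).continuous.intervalIntegrable _ _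
  · exact (f * schrodinger v g : Smooth ℝ).continuous.intervalIntegrable _ _

/-- The value and the derivative at `0` of an eigenfunction of the Hill operator. -/
def initialData (N : ℕ) (v : floquet 0) (μ : ℝ) : eigenspace (hill N v) μ →ₗ[ℝ] ℝ × ℝ where
  toFun f := (f.1.1 0, D ℝ f.1.1 0)
  map_add' _ _ := by simp
  map_smul' _ _ := by simp

lemma initialData_injective : Function.Injective (initialData N v μ) :=
  (injective_iff_map_eq_zero _).2 fun f hf => by
    have := (isSolution_of_schrodinger_eq (mem_eigenspace_hill.1 f.2)).eq_zero
      (v.1.continuous.sub continuous_const) (congrArg Prod.fst hf) (congrArg Prod.snd hf)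
    exact Subtype.ext (Subtype.ext (DFunLike.coe_injective this))

lemma finrank_eigenspace_hill_eq_two {f g : floquet N} (hf : f ∈ eigenspace (hill N v) μ)
    (hg : g ∈ eigenspace (hill N v) μ) (hf0 : f ≠ 0) (hg0 : g ≠ 0) {ε : ℝ} (hε : ε ≠ 0)
    (hεf : affComp (-1) 0 (f : Smooth ℝ) = ε • (f : Smooth ℝ))
    (hεg : affComp (-1) 0 (g : Smooth ℝ) = -ε • (g : Smooth ℝ)) :
    finrank ℝ (eigenspace (hill N v) μ) = 2 := by
  have : FiniteDimensional ℝ (eigenspace (hill N v) μ) := .of_injective _ initialData_injective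
  apply le_antisymm
  · simpa using LinearMap.finrank_le_finrank_of_injective (initialData_injective (N := N))
  have hli : LinearIndependent ℝ ![(⟨f, hf⟩ : eigenspace (hill N v) μ), ⟨g, hg⟩] := by
    refine LinearIndependent.pair_iff.2 fun s t hst => ?_
    have h₁ : s • (f : Smooth ℝ) + t • (g : Smooth ℝ) = 0 :=
      congrArg (fun h => (h.1 : Smooth ℝ)) hst
    have h₂ := congrArg (affComp (-1) 0) h₁
    rw [map_add, map_smul, map_smul, hεf, hεg, map_zero] at h₂
    have hs : (2 * ε * s) • (f : Smooth ℝ) = 0 := by linear_combination (norm := module) ε • h₁ + h₂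
    have ht : (2 * ε * t) • (g : Smooth ℝ) = 0 := by linear_combination (norm := module) ε • h₁ - h₂
    simpa [hε, hf0, hg0] using And.intro hs ht
  simpa using hli.fintype_card_le_finrank

lemma exists_affComp_neg_one_eq_smul (hv : affComp (-1) 0 (v : Smooth ℝ) = v)
    (h : eigenspace (hill N v) μ ≠ ⊥) : ∃ f ∈ eigenspace (hill N v) μ, f ≠ 0 ∧
      ∃ ε : ℝ, ε ≠ 0 ∧ affComp (-1) 0 (f : Smooth ℝ) = ε • (f : Smooth ℝ) := by
  obtain ⟨f, hf, hf0⟩ := Submodule.exists_mem_ne_zero_of_ne_bot h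
  let g : floquet N := ⟨affComp (-1) 0 f, floquet.affComp_neg_one_mem f.2⟩
  have hg : g ∈ eigenspace (hill N v) μ := by
    rw [mem_eigenspace_hill] at hf ⊢
    rw [schrodinger_affComp_neg_one hv, hf, map_smul]
  have hgf : affComp (-1) 0 (g : Smooth ℝ) = f := by
    ext x
    simp [g]
  by_cases hsum : f + g = 0
  · refine ⟨f, hf, hf0, -1, by norm_num, ?_⟩
    rw [neg_one_smul]
    exact congrArg Subtype.val (eq_neg_of_add_eq_zero_right hsum)
  · refine ⟨f + g, add_mem hf hg, hsum, 1, one_ne_zero, ?_⟩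
    rw [one_smul, Submodule.coe_add, map_add, hgf, add_comm]

end Hill

section Ordering

open Smooth (D)

open Module Module.End

/-- The (anti)periodic smooth functions `w * q` with `q` a homogeneous trigonometric polynomial. -/
def weightedTrigPoly (w : Smooth ℝ) (N : ℕ) : Submodule ℝ (floquet N) :=
  ((trigPoly ℝ N).map (LinearMap.mulLeft ℝ w)).comap (floquet N).subtype

lemma mem_weightedTrigPoly {w : Smooth ℝ} {N : ℕ} {f : floquet N} :
    f ∈ weightedTrigPoly w N ↔ ∃ q ∈ trigPoly ℝ N, w * q = f := Iff.rfl

lemma finrank_weightedTrigPoly {w : Smooth ℝ} (hw : w ∈ floquet 0) (hw0 : ∀ x, w x ≠ 0) (N : ℕ) :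
    finrank ℝ (weightedTrigPoly w N) = N + 1 := by
  have hle : (trigPoly ℝ N).map (LinearMap.mulLeft ℝ w) ≤ floquet N := by
    rintro _ ⟨q, hq, rfl⟩
    simpa using floquet.mul_mem hw (trigPoly_le_floquet N hq)
  have hinj : Function.Injective (LinearMap.mulLeft ℝ w) := fun p q hpq =>
    Smooth.ext fun x => mul_left_cancel₀ (hw0 x) (DFunLike.congr_fun hpq x)
  rw [weightedTrigPoly, (Submodule.comapSubtypeEquivOfLe hle).finrank_eq,
    ← (Submodule.equivMapOfInjective _ hinj _).finrank_eq, trigPoly.finrank_eq]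

variable {N : ℕ} {v : floquet 0} {w : Smooth ℝ}

lemma card_zeros_le_of_le {f g : floquet N} {lam μ : ℝ} (hf : f ∈ eigenspace (hill N v) lam)
    (hg : g ∈ eigenspace (hill N v) μ) (hf0 : f ≠ 0) (hg0 : g ≠ 0)
    (hw0 : ∀ x, w x ≠ 0) (hfw : f ∈ weightedTrigPoly w N) (hle : μ ≤ lam) {c : ℝ}
    (hc : (g : Smooth ℝ) c = 0) {s : Finset ℝ}
    (hs : ∀ x ∈ s, x ∈ Ico c (c + π) ∧ (g : Smooth ℝ) x = 0) : s.card ≤ N := by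
  obtain ⟨q, hq, hqf⟩ := mem_weightedTrigPoly.1 hfw
  have hq0 : q ≠ 0 := by
    rintro rfl
    exact hf0 (Subtype.ext (by simp [← hqf]))
  obtain ⟨t, hcard, ht⟩ := IsSolution.exists_finset_zeros_of_le
    (isSolution_of_schrodinger_eq (mem_eigenspace_hill.1 hg))
    (isSolution_of_schrodinger_eq (mem_eigenspace_hill.1 hf))
    (v.1.continuous.sub continuous_const) (v.1.continuous.sub continuous_const)
    (fun x => sub_le_sub_left hle _) (fun h => hg0 (Subtype.ext (DFunLike.coe_injective h)))
    ((floquet.apply_add_pi_eq_zero_iff g.2).2 hc) s hs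
  rw [← hcard]
  refine trigPoly.card_zeros_le hq hq0 fun x hx => ⟨(ht x hx).1, ?_⟩
  have := (ht x hx).2
  rw [← hqf, Smooth.mul_apply] at this
  exact (mul_eq_zero.1 this).resolve_left (hw0 x)

theorem lt_of_mem_weightedTrigPoly_of_mem_orthogonal {f g : floquet N} {lam μ : ℝ}
    (hw : w ∈ floquet 0) (hw0 : ∀ x, 0 < w x)
    (hf : f ∈ eigenspace (hill N v) lam) (hg : g ∈ eigenspace (hill N v) μ) (hf0 : f ≠ 0)
    (hg0 : g ≠ 0) (hfw : f ∈ weightedTrigPoly w N) (hgw : g ∈ (weightedTrigPoly w N)ᗮ) :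
    lam < μ := by
  by_contra! hle
  have hsol := isSolution_of_schrodinger_eq (mem_eigenspace_hill.1 hg)
  have hsimple : ∀ x, (g : Smooth ℝ) x = 0 → D ℝ (g : Smooth ℝ) x ≠ 0 := fun x hx hx' =>
    hg0 (Subtype.ext (DFunLike.coe_injective
      (hsol.eq_zero (v.1.continuous.sub continuous_const) hx hx')))
  obtain ⟨c, hc⟩ : ∃ c, ∀ s : Finset ℝ,
      (∀ x ∈ s, x ∈ Ico c (c + π) ∧ (g : Smooth ℝ) x = 0) → s.card ≤ N := by
    by_cases h : ∃ c, (g : Smooth ℝ) c = 0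
    · exact h.imp fun c hc s hs =>
        card_zeros_le_of_le hf hg hf0 hg0 (fun x => (hw0 x).ne') hfw hle hc hs
    · push Not at h
      refine ⟨0, fun s hs => ?_⟩
      rw [Finset.eq_empty_of_forall_notMem fun x hx => h x (hs x hx).2]
      exact N.zero_le
  obtain ⟨q, hq, hnonneg, x, hx⟩ := exists_trigPoly_mul_nonneg g.2 hsimple hc
  have hwq : w * q ∈ floquet N := by simpa using floquet.mul_mem hw (trigPoly_le_floquet N hq)
  have horth : inner ℝ (⟨w * q, hwq⟩ : floquet N) g = 0 :=
    Submodule.inner_right_of_mem_orthogonal (mem_weightedTrigPoly.2 ⟨q, hq, rfl⟩) hgw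
  have hprod : ∀ y, (w * q * g : Smooth ℝ) y = w y * ((g : Smooth ℝ) * q) y := fun y => by
    simp only [Smooth.mul_apply]
    ring
  refine (floquet.intervalIntegral_pos (floquet.mul_mem hwq g.2) (fun y => ?_) ⟨x, ?_⟩).ne' horth
  · exact hprod y ▸ mul_nonneg (hw0 y).le (hnonneg y)
  · exact hprod x ▸ mul_ne_zero (hw0 x).ne' hx

theorem exists_finset_eigenvalues (hw : w ∈ floquet 0) (hw0 : ∀ x, 0 < w x)
    (hinv : weightedTrigPoly w N ∈ (hill N v).invtSubmodule) : ∃ Λ : Finset ℝ,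
      ∑ μ ∈ Λ, finrank ℝ (eigenspace (hill N v) μ) = N + 1 ∧
      (∀ μ ∈ Λ, finrank ℝ (eigenspace (hill N v) μ) ≠ 0) ∧
      ∀ μ ∉ Λ, eigenspace (hill N v) μ ≠ ⊥ →
        eigenspace (hill N v) μ ≤ (weightedTrigPoly w N)ᗮ ∧ ∀ lam ∈ Λ, lam < μ := by
  have hrank := finrank_weightedTrigPoly hw (fun x => (hw0 x).ne') N
  have : FiniteDimensional ℝ (weightedTrigPoly w N) := .of_finrank_pos (by omega)
  have hlt : ∀ lam μ, ¬ Disjoint (eigenspace (hill N v) lam) (weightedTrigPoly w N) →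
      ¬ Disjoint (eigenspace (hill N v) μ) (weightedTrigPoly w N)ᗮ → lam < μ := by
    intro lam μ h₁ h₂
    obtain ⟨f, ⟨hf, hfw⟩, hf0⟩ :=
      Submodule.exists_mem_ne_zero_of_ne_bot (disjoint_iff.not.1 h₁)
    obtain ⟨g, ⟨hg, hgw⟩, hg0⟩ :=
      Submodule.exists_mem_ne_zero_of_ne_bot (disjoint_iff.not.1 h₂)
    exact lt_of_mem_weightedTrigPoly_of_mem_orthogonal hw hw0 hf hg hf0 hg0 hfw hgw
  obtain ⟨Λ, hsum, hΛ⟩ := sum_finrank_eigenspace hill_isSymmetric hinv fun μ hμ =>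
    eigenspace_le_of_disjoint_orthogonal hill_isSymmetric hinv <| by
      by_contra h
      exact (hlt μ μ hμ h).false
  refine ⟨Λ, hsum.trans hrank, fun μ hμ h0 => (hΛ μ).1 hμ ?_, fun μ hμ hne => ?_⟩
  · have : FiniteDimensional ℝ (eigenspace (hill N v) μ) := .of_injective _ initialData_injective
    rw [Submodule.finrank_eq_zero.1 h0]
    exact disjoint_bot_left
  · have hle := eigenspace_le_orthogonal hill_isSymmetric hinv (not_not.1 ((hΛ μ).not.1 hμ))
    refine ⟨hle, fun lam hlam => hlt lam μ ((hΛ lam).1 hlam) fun h => hne ?_⟩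
    rwa [disjoint_iff, inf_eq_left.2 hle] at h

end Ordering

section Ince

open Smooth (D affComp postcomp)

variable {𝕜 : Type*} [RCLike 𝕜]

/-- Ince's operator `ψ ↦ -ψ'' + 4a (sin 2x ψ' - m cos 2x ψ)`. -/
def ince (a m : 𝕜) : Module.End 𝕜 (Smooth 𝕜) :=
  (4 * a) • (LinearMap.mulLeft 𝕜 (Smooth.sin 𝕜 2 0) ∘ₗ (D 𝕜).toLinearMap -
    m • LinearMap.mulLeft 𝕜 (Smooth.cos 𝕜 2 0)) - (D 𝕜).toLinearMap ∘ₗ (D 𝕜).toLinearMap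

lemma ince_apply (a m : 𝕜) (f : Smooth 𝕜) :
    ince a m f = (4 * a) • (Smooth.sin 𝕜 2 0 * D 𝕜 f - m • (Smooth.cos 𝕜 2 0 * f)) -
      D 𝕜 (D 𝕜 f) := rfl

lemma ince_mem_trigPoly (a : 𝕜) {N : ℕ} {q : Smooth 𝕜} (hq : q ∈ trigPoly 𝕜 N) :
    ince a N q ∈ trigPoly 𝕜 N :=
  sub_mem (Submodule.smul_mem _ _ (trigPoly.sin_two_mul_D_sub_mem hq))
    (trigPoly.D_mem (trigPoly.D_mem hq))

lemma ince_affComp_one_pi_div_two (a m : 𝕜) (f : Smooth 𝕜) :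
    ince (-a) m (affComp 1 (π / 2) f) = affComp 1 (π / 2) (ince a m f) := by
  have hx : ∀ x : ℝ, 2 * (x + π / 2) = 2 * x + π := fun x => by ring
  ext x
  simp only [ince_apply, Smooth.D_affComp, map_one, one_smul, map_sub, map_smul, map_mul,
    Smooth.sub_apply, Smooth.smul_apply, Smooth.mul_apply, Smooth.sin_apply, Smooth.cos_apply,
    Smooth.affComp_apply, add_zero, one_mul, hx, Real.sin_add_pi, Real.cos_add_pi, map_neg]
  ring

lemma ince_postcomp_ofReal (a m : ℝ) (f : Smooth ℝ) :
    ince (a : ℂ) m (postcomp Complex.ofRealCLM f) =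
      postcomp Complex.ofRealCLM (ince a m f) := by
  ext x
  simp [ince_apply, Smooth.D_postcomp, -Complex.coe_smul]

lemma postcomp_ince (ℓ : ℂ →L[ℝ] ℝ) (a m : ℝ) (f : Smooth ℂ) :
    postcomp ℓ (ince (a : ℂ) m f) = ince a m (postcomp ℓ f) := by
  ext x
  have hℓ : ∀ (r : ℝ) (z : ℂ), ℓ (r * z) = r * ℓ z := fun r z => by
    rw [← Complex.real_smul, map_smul, smul_eq_mul]
  have ha : 4 * (a : ℂ) = (4 * a : ℝ) := by push_cast; ring
  simp [ince_apply, Smooth.D_postcomp, hℓ, ha, -Complex.coe_smul, -Complex.ofReal_mul,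
    -Complex.ofReal_sin, -Complex.ofReal_cos]

/-- The gauge factor `exp (a cos 2x)`, conjugation with which turns the Whittaker–Hill operator
into Ince's operator. -/
def gauge (a : ℝ) : Smooth ℝ :=
  .mk (fun x => Real.exp (a * Real.cos (2 * x))) (by fun_prop)

lemma gauge_pos (a x : ℝ) : 0 < gauge a x := Real.exp_pos _

lemma gauge_mem_floquet (a : ℝ) : gauge a ∈ floquet 0 := fun x => by
  simp [gauge, mul_add, Real.cos_add_two_pi]

lemma gauge_mul_gauge_neg (a : ℝ) : gauge a * gauge (-a) = 1 := by
  ext x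
  simp [gauge, ← Real.exp_add]

lemma affComp_neg_one_gauge (a : ℝ) : affComp (-1) 0 (gauge a) = gauge a := by
  ext x
  simp [gauge]

lemma D_gauge (a : ℝ) : D ℝ (gauge a) = -(2 * a) • (Smooth.sin ℝ 2 0 * gauge a) :=
  Smooth.D_eq_of_hasDerivAt fun x => by
    refine (((hasDerivAt_id' x).const_mul 2).cos.const_mul a).exp.congr_deriv ?_
    simp only [gauge, Smooth.smul_apply, Smooth.mul_apply, Smooth.sin_apply, add_zero,
      Real.ringHom_apply, Smooth.coe_mk]
    ring

/-- The potential `-(4a (m + 1) cos 2x + 2a² cos 4x)` of the Whittaker–Hill operator. -/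
def whittakerHill (a m : ℝ) : floquet 0 :=
  ⟨-((4 * a * (m + 1)) • Smooth.cos ℝ 2 0 + (2 * a ^ 2) • Smooth.cos ℝ 4 0), fun x => by
    have h : Real.cos (4 * (x + π)) = Real.cos (4 * x) := by
      rw [show 4 * (x + π) = 4 * x + 2 * π + 2 * π by ring, Real.cos_add_two_pi,
        Real.cos_add_two_pi]
    simp [mul_add (2 : ℝ), Real.cos_add_two_pi, h]⟩

lemma whittakerHill_apply (a m x : ℝ) : (whittakerHill a m : Smooth ℝ) x =
    -(4 * a * (m + 1) * Real.cos (2 * x) + 2 * a ^ 2 * Real.cos (4 * x)) := by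
  simp [whittakerHill]

lemma affComp_neg_one_whittakerHill (a m : ℝ) :
    affComp (-1) 0 (whittakerHill a m : Smooth ℝ) = whittakerHill a m := by
  ext x
  simp [whittakerHill_apply]

lemma whittakerHill_neg (a m : ℝ) : whittakerHill (-a) (-m - 2) = whittakerHill a m :=
  Subtype.ext <| Smooth.ext fun x => by
    rw [whittakerHill_apply, whittakerHill_apply]
    ring

lemma schrodinger_gauge_mul (a m : ℝ) (f : Smooth ℝ) :
    schrodinger (whittakerHill a m) (gauge a * f) =
      gauge a * (ince a m f - (2 * a ^ 2) • f) := by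
  ext x
  have hcos : Real.cos (4 * x) = 1 - 2 * Real.sin (2 * x) ^ 2 := by
    rw [show 4 * x = 2 * (2 * x) by ring, Real.cos_two_mul, Real.cos_sq']
    ring
  simp only [schrodinger_apply, Derivation.leibniz, D_gauge, map_add, smul_eq_mul,
    (D ℝ).map_smul, Smooth.D_sin, ince_apply]
  simp only [Smooth.sub_apply, Smooth.mul_apply, Smooth.add_apply, Smooth.smul_apply,
    whittakerHill_apply, Smooth.sin_apply, Smooth.cos_apply, hcos]
  simp only [add_zero, Real.ringHom_apply]
  ring

lemma schrodinger_gauge_mul_eq_smul_iff {a m μ : ℝ} {f : Smooth ℝ} :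
    schrodinger (whittakerHill a m) (gauge a * f) = μ • (gauge a * f) ↔
      ince a m f = (μ + 2 * a ^ 2) • f := by
  rw [schrodinger_gauge_mul, ← mul_smul_comm,
    (IsUnit.of_mul_eq_one _ (gauge_mul_gauge_neg a)).mul_right_inj, sub_eq_iff_eq_add, add_smul]

lemma weightedTrigPoly_gauge_mem_invtSubmodule (a : ℝ) (N : ℕ) :
    weightedTrigPoly (gauge a) N ∈ (hill N (whittakerHill a N)).invtSubmodule := by
  rintro f ⟨q, hq, hqf⟩
  refine mem_weightedTrigPoly.2 ⟨ince a N q - (2 * a ^ 2) • q,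
    sub_mem (ince_mem_trigPoly a hq) (Submodule.smul_mem _ _ hq), ?_⟩
  rw [← schrodinger_gauge_mul]
  exact congrArg (schrodinger _) hqf

end Ince

section ArithProgression

open Polynomial

/-- The monic polynomial with roots `b, b + δ, …, b + (n - 1) * δ`. -/
def arithPoly {R : Type*} [CommRing R] (b δ : R) (n : ℕ) : R[X] :=
  ∏ j ∈ Finset.range n, (X - C (b + j * δ))

variable {R : Type*} [CommRing R] (b δ : R) (n : ℕ)

lemma arithPoly_comp_X_add_C_neg_mul : (arithPoly b δ n).comp (X + C (-δ)) * (X - C b) =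
    (X - C (b + n * δ)) * arithPoly b δ n := by
  have hshift : (arithPoly b δ n).comp (X + C (-δ)) =
      ∏ j ∈ Finset.range n, (X - C (b + (j + 1 : ℕ) * δ)) := by
    rw [arithPoly, Polynomial.prod_comp]
    refine Finset.prod_congr rfl fun j _ => ?_
    rw [sub_comp, X_comp, C_comp, C_neg, ← sub_eq_add_neg, sub_sub, ← C_add]
    congr 2
    push_cast
    ring
  have h := Finset.prod_range_succ' (fun j : ℕ => (X - C (b + j * δ) : R[X])) n
  rw [Nat.cast_zero, zero_mul, add_zero] at h
  rw [hshift, ← h, Finset.prod_range_succ, mul_comm, arithPoly]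

lemma arithPoly_reverse : arithPoly (b + n * δ) (-δ) (n + 1) = arithPoly b δ (n + 1) := by
  rw [arithPoly, arithPoly, ← Finset.prod_range_reflect]
  refine Finset.prod_congr rfl fun j hj => ?_
  rw [Nat.add_sub_cancel, Nat.cast_sub (Finset.mem_range_succ_iff.1 hj)]
  congr 2
  ring

lemma arithPoly_comp_neg_X : (arithPoly b δ n).comp (-X) = (-1) ^ n * arithPoly (-b) (-δ) n := by
  rw [arithPoly, Polynomial.prod_comp, arithPoly, ← Finset.card_range n, ← Finset.prod_const,
    Finset.card_range, ← Finset.prod_mul_distrib]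
  refine Finset.prod_congr rfl fun j _ => ?_
  rw [sub_comp, X_comp, C_comp, mul_neg, ← neg_add, C_neg]
  ring

lemma semiconjBy_aeval {A : Type*} [Ring A] [Algebra R A] {a x y : A} (h : SemiconjBy a x y)
    (p : R[X]) : SemiconjBy a (aeval x p) (aeval y p) := by
  induction p using Polynomial.induction_on' with
  | add p q hp hq => simpa only [map_add] using hp.add_right hq
  | monomial n c =>
    simp only [aeval_monomial]
    exact .mul_right (Algebra.commutes c a).symm (h.pow_right n)

lemma aeval_mul_mul_aeval {A : Type*} [Ring A] [Algebra R A] {M T : A} {s : R[X]} {p q r : R[X]}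
    (h : T * M = M * aeval T s) (hpqr : p.comp s * q = r * p) :
    aeval T p * (M * aeval T q) = M * aeval T r * aeval T p := by
  rw [← mul_assoc, ← (semiconjBy_aeval h.symm p).eq, mul_assoc, mul_assoc, ← aeval_comp,
    ← map_mul, ← map_mul, hpqr]

lemma ker_aeval_prod_X_sub_C_le {K V ι : Type*} [Field K] [AddCommGroup V] [Module K V]
    (T : Module.End K V) {c : ι → K} (hc : Function.Injective c) (s : Finset ι) :
    LinearMap.ker (aeval T (∏ i ∈ s, (X - C (c i)))) ≤ ⨆ i ∈ s, T.eigenspace (c i) := by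
  classical
  induction s using Finset.induction with
  | empty => simp [LinearMap.ker_eq_bot', Module.End.one_apply]
  | insert i s hi ih =>
    have hcop : IsCoprime (X - C (c i)) (∏ j ∈ s, (X - C (c j))) :=
      .prod_right fun j hj => pairwise_coprime_X_sub_C hc fun h => hi (h ▸ hj)
    rw [Finset.prod_insert hi, ← sup_ker_aeval_eq_ker_aeval_mul_of_coprime _ hcop,
      Finset.iSup_insert]
    refine sup_le_sup (le_of_eq ?_) ih
    rw [map_sub, aeval_X, aeval_C, Module.End.eigenspace_def, Algebra.algebraMap_eq_smul_one]

end ArithProgression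

section Intertwining

open Polynomial

open Smooth (D affComp)

lemma Smooth.D_cexp (b : ℂ) : D ℂ (Smooth.cexp b) = b • Smooth.cexp b :=
  Smooth.D_eq_of_hasDerivAt fun x => by
    refine (((hasDerivAt_id' x).ofReal_comp.const_mul b).cexp).congr_deriv ?_
    simp only [Complex.ofReal_one, mul_one, mul_comm, Smooth.smul_apply, Smooth.cexp, Smooth.coe_mk]

lemma eq_smul_cexp_of_D_eq_smul {b : ℂ} {f : Smooth ℂ} (hf : D ℂ f = b • f) :
    f = f 0 • Smooth.cexp b := by
  let g := f * Smooth.cexp (-b)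
  have hg : D ℂ g = 0 := by
    simp only [g, Derivation.leibniz, Smooth.D_cexp, hf, smul_eq_mul]
    rw [neg_smul, mul_neg, mul_smul_comm, mul_smul_comm, mul_comm, neg_add_cancel]
  have hconst : ∀ x, g x = g 0 := fun x =>
    is_const_of_deriv_eq_zero g.differentiable (fun y => DFunLike.congr_fun hg y) x 0
  ext x
  have h := congrArg (· * Complex.exp (b * x)) (hconst x)
  simpa [g, Smooth.cexp, mul_assoc, ← Complex.exp_add] using h

lemma D_mul_mulLeft_cexp (b : ℂ) : (D ℂ).toLinearMap * LinearMap.mulLeft ℂ (Smooth.cexp b) =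
    LinearMap.mulLeft ℂ (Smooth.cexp b) * aeval (D ℂ).toLinearMap (X + C b) :=
  LinearMap.ext fun f => by simp [Smooth.D_cexp, mul_add, mul_comm, add_comm]

/-- The monic differential operator of order `N + 1` with constant coefficients that annihilates
`trigPoly ℂ N`; the roots of its symbol are `-N i, (2 - N) i, …, N i`. -/
def trigAnnihilator (N : ℕ) : Module.End ℂ (Smooth ℂ) :=
  aeval (D ℂ).toLinearMap (arithPoly (-(N * Complex.I)) (2 * Complex.I) (N + 1))

lemma ince_eq (a m : ℂ) : ince a m = -(2 * a * Complex.I) •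
      (LinearMap.mulLeft ℂ (Smooth.cexp (2 * Complex.I)) *
          aeval (D ℂ).toLinearMap (X - C (m * Complex.I)) -
        LinearMap.mulLeft ℂ (Smooth.cexp (-(2 * Complex.I))) *
          aeval (D ℂ).toLinearMap (X - C (-(m * Complex.I)))) -
      (D ℂ).toLinearMap * (D ℂ).toLinearMap := by
  have hexp : ∀ ε : ℂ, ε = 1 ∨ ε = -1 → Smooth.cexp (ε * (2 * Complex.I)) =
      Smooth.cos ℂ 2 0 + (ε * Complex.I) • Smooth.sin ℂ 2 0 := fun ε hε => by
    ext x
    simp only [Smooth.cexp, Smooth.coe_mk, ← mul_assoc, mul_right_comm _ Complex.I,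
      Complex.exp_mul_I]
    rcases hε with rfl | rfl <;> simp [mul_comm]
  have hplus := hexp 1 (.inl rfl)
  have hminus := hexp (-1) (.inr rfl)
  simp only [one_mul, neg_one_mul] at hplus hminus
  refine LinearMap.ext fun f => Smooth.ext fun x => ?_
  simp only [ince_apply, hplus, hminus, Smooth.sub_apply, Smooth.smul_apply, Smooth.mul_apply,
    Smooth.add_apply, Smooth.neg_apply, Smooth.sin_apply, Smooth.cos_apply, add_zero, map_mul,
    map_add, map_neg, aeval_sub, aeval_X, aeval_C, neg_smul, sub_neg_eq_add, LinearMap.sub_apply,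
    LinearMap.add_apply, LinearMap.smul_apply, LinearMap.mulLeft_apply, Module.End.mul_apply,
    Derivation.coeFn_coe, Module.algebraMap_end_apply, map_smul, sub_left_inj]
  linear_combination (4 * a * (Real.sin (2 * x) * D ℂ f x - m * Real.cos (2 * x) * f x)) *
    Complex.I_sq

lemma arithPoly_symm (N : ℕ) : arithPoly (N * Complex.I) (-(2 * Complex.I)) (N + 1) =
    arithPoly (-(N * Complex.I)) (2 * Complex.I) (N + 1) := by
  rw [← arithPoly_reverse (-(N * Complex.I))]
  congr 1
  ring

lemma trigAnnihilator_mul_ince (a : ℂ) (N : ℕ) :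
    trigAnnihilator N * ince a N = ince a (-N - 2) * trigAnnihilator N := by
  have hminus := arithPoly_comp_X_add_C_neg_mul (-(N * Complex.I)) (2 * Complex.I) (N + 1)
  have hplus := arithPoly_comp_X_add_C_neg_mul (N * Complex.I) (-(2 * Complex.I)) (N + 1)
  rw [show -(N * Complex.I) + (N + 1 : ℕ) * (2 * Complex.I) = -((-N - 2) * Complex.I) by
    push_cast; ring] at hminus
  rw [neg_neg, arithPoly_symm,
    show N * Complex.I + (N + 1 : ℕ) * -(2 * Complex.I) = (-N - 2) * Complex.I by
      push_cast; ring] at hplus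
  rw [ince_eq, ince_eq, mul_sub, mul_smul_comm, mul_sub, trigAnnihilator,
    aeval_mul_mul_aeval (D_mul_mulLeft_cexp _) hplus,
    aeval_mul_mul_aeval (D_mul_mulLeft_cexp _) hminus, ← sub_mul, ← smul_mul_assoc]
  have hcomm : Commute ((D ℂ).toLinearMap * (D ℂ).toLinearMap) (D ℂ).toLinearMap :=
    .mul_left rfl rfl
  rw [← (semiconjBy_aeval hcomm (arithPoly (-(N * Complex.I)) (2 * Complex.I) (N + 1))).eq,
    ← sub_mul]

lemma trigAnnihilator_affComp_one (N : ℕ) (t : ℝ) (f : Smooth ℂ) :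
    trigAnnihilator N (affComp 1 t f) = affComp 1 t (trigAnnihilator N f) := by
  have h : SemiconjBy (affComp 1 t : Smooth ℂ →ₐ[ℂ] Smooth ℂ).toLinearMap (D ℂ).toLinearMap
      (D ℂ).toLinearMap := LinearMap.ext fun f => by simp [Smooth.D_affComp]
  exact (LinearMap.congr_fun (semiconjBy_aeval h _).eq f).symm

lemma trigAnnihilator_affComp_neg_one (N : ℕ) (f : Smooth ℂ) :
    trigAnnihilator N (affComp (-1) 0 f) =
      (-1 : ℂ) ^ (N + 1) • affComp (-1) 0 (trigAnnihilator N f) := by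
  have h : SemiconjBy (affComp (-1) 0 : Smooth ℂ →ₐ[ℂ] Smooth ℂ).toLinearMap (D ℂ).toLinearMap
      (aeval (D ℂ).toLinearMap (-X : ℂ[X])) := LinearMap.ext fun f => by simp [Smooth.D_affComp]
  have hcomp := LinearMap.congr_fun
    (semiconjBy_aeval h (arithPoly (-(N * Complex.I)) (2 * Complex.I) (N + 1))).eq f
  rw [← aeval_comp, arithPoly_comp_neg_X, neg_neg, arithPoly_symm] at hcomp
  rcases (N + 1).even_or_odd with hN | hN <;> rw [hN.neg_one_pow] at hcomp ⊢
  · simpa [trigAnnihilator] using hcomp.symm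
  · simpa [trigAnnihilator, neg_eq_iff_eq_neg] using hcomp.symm

lemma mem_trigPoly_of_trigAnnihilator_eq_zero {N : ℕ} {f : Smooth ℂ}
    (hf : trigAnnihilator N f = 0) : f ∈ trigPoly ℂ N := by
  have hinj : Function.Injective fun j : ℕ =>
      -(N * Complex.I) + j * (2 * Complex.I) := fun j k h => by simpa using h
  have hmem := ker_aeval_prod_X_sub_C_le (D ℂ).toLinearMap hinj (Finset.range (N + 1)) hf
  refine (iSup₂_le fun j hj g hg => ?_ : _ ≤ trigPoly ℂ N) hmem
  obtain ⟨k, rfl⟩ := Nat.exists_eq_add_of_le (Finset.mem_range_succ_iff.1 hj)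
  have hD : D ℂ g = (((j : ℂ) - k) * Complex.I) • g := by
    rw [show ((j : ℂ) - k) * Complex.I = -((j + k : ℕ) * Complex.I) + j * (2 * Complex.I) by
      push_cast; ring]
    exact Module.End.mem_eigenspace_iff.1 hg
  rw [eq_smul_cexp_of_D_eq_smul hD]
  exact Submodule.smul_mem _ _ (trigPoly.cexp_mem j k)

end Intertwining

section Coexistence

open Smooth (affComp postcomp)

open Module Module.End

variable {N : ℕ}

/-- The real-valued operator `φ ↦ ℓ (trigAnnihilator N φ)`, where `ℓ` is typically the real or the
imaginary part. -/
def realAnnihilator (N : ℕ) (ℓ : ℂ →L[ℝ] ℝ) : Module.End ℝ (Smooth ℝ) where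
  toFun φ := postcomp ℓ (trigAnnihilator N (postcomp Complex.ofRealCLM φ))
  map_add' φ ψ := by
    have h : postcomp Complex.ofRealCLM (φ + ψ) =
        postcomp Complex.ofRealCLM φ + postcomp Complex.ofRealCLM ψ :=
      Smooth.ext fun x => map_add Complex.ofRealCLM _ _
    rw [h, map_add]
    exact Smooth.ext fun x => map_add ℓ _ _
  map_smul' c φ := by
    have h : postcomp Complex.ofRealCLM (c • φ) = (c : ℂ) • postcomp Complex.ofRealCLM φ :=
      Smooth.ext fun x => Complex.ofReal_mul _ _
    rw [h, map_smul]
    exact Smooth.ext fun x => ℓ.map_smul c _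

lemma realAnnihilator_ince (ℓ : ℂ →L[ℝ] ℝ) (a : ℝ) (φ : Smooth ℝ) :
    realAnnihilator N ℓ (ince a N φ) = ince a (-N - 2) (realAnnihilator N ℓ φ) := by
  have h := LinearMap.congr_fun (trigAnnihilator_mul_ince a N) (postcomp Complex.ofRealCLM φ)
  have hN : (-N - 2 : ℂ) = ((-N - 2 : ℝ) : ℂ) := by push_cast; ring
  rw [Module.End.mul_apply, Module.End.mul_apply, ← Complex.ofReal_natCast, ince_postcomp_ofReal,
    Complex.ofReal_natCast, hN] at h
  exact (congrArg (postcomp ℓ) h).trans (postcomp_ince ℓ _ _ _)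

lemma realAnnihilator_affComp_one (ℓ : ℂ →L[ℝ] ℝ) (t : ℝ) (φ : Smooth ℝ) :
    realAnnihilator N ℓ (affComp 1 t φ) = affComp 1 t (realAnnihilator N ℓ φ) :=
  congrArg (postcomp ℓ) (trigAnnihilator_affComp_one N t (postcomp Complex.ofRealCLM φ))

lemma realAnnihilator_affComp_neg_one (ℓ : ℂ →L[ℝ] ℝ) (φ : Smooth ℝ) :
    realAnnihilator N ℓ (affComp (-1) 0 φ) =
      (-1 : ℝ) ^ (N + 1) • affComp (-1) 0 (realAnnihilator N ℓ φ) := by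
  refine (congrArg (postcomp ℓ)
    (trigAnnihilator_affComp_neg_one N (postcomp Complex.ofRealCLM φ))).trans ?_
  ext x
  rw [← Complex.ofReal_one, ← Complex.ofReal_neg, ← Complex.ofReal_pow]
  exact ℓ.map_smul _ _

lemma realAnnihilator_mem_floquet (ℓ : ℂ →L[ℝ] ℝ) {φ : Smooth ℝ} (hφ : φ ∈ floquet N) :
    realAnnihilator N ℓ φ ∈ floquet N := fun x => by
  have hshift : affComp 1 π φ = (-1 : ℝ) ^ N • φ := Smooth.ext fun x => by
    simpa using hφ x
  have h := realAnnihilator_affComp_one (N := N) ℓ π φ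
  rw [hshift, map_smul] at h
  simpa using (DFunLike.congr_fun h x).symm

lemma mem_trigPoly_of_realAnnihilator_eq_zero {φ : Smooth ℝ}
    (h : ∀ ℓ, realAnnihilator N ℓ φ = 0) : φ ∈ trigPoly ℝ N := by
  have hzero : trigAnnihilator N (postcomp Complex.ofRealCLM φ) = 0 := Smooth.ext fun x =>
    Complex.ext (DFunLike.congr_fun (h Complex.reCLM) x) (DFunLike.congr_fun (h Complex.imCLM) x)
  exact trigPoly.postcomp_mem (mem_trigPoly_of_trigAnnihilator_eq_zero hzero) Complex.reCLM

/-- The witness is `φ` with the annihilator applied, shifted by a quarter period; the shift is what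
reverses the parity. -/
lemma exists_ince_neg_eq_smul {a lam ε : ℝ} {φ : Smooth ℝ} (hφ : φ ∈ floquet N)
    (hlam : ince a N φ = lam • φ) (hε : affComp (-1) 0 φ = ε • φ) (hφN : φ ∉ trigPoly ℝ N) :
    ∃ ψ ∈ floquet N, ψ ≠ 0 ∧ ince (-a) (-N - 2) ψ = lam • ψ ∧ affComp (-1) 0 ψ = -ε • ψ := by
  obtain ⟨ℓ, hℓ⟩ := not_forall.1 (mt mem_trigPoly_of_realAnnihilator_eq_zero hφN)
  let χ := realAnnihilator N ℓ φ
  have hχ : χ ∈ floquet N := realAnnihilator_mem_floquet ℓ hφ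
  have hχlam : ince a (-N - 2) χ = lam • χ := by
    rw [← realAnnihilator_ince, hlam, map_smul]
  have hχε : ∀ x, ε * χ x = (-1) ^ (N + 1) * χ (-x) := fun x => by
    have h := realAnnihilator_affComp_neg_one (N := N) ℓ φ
    rw [hε, map_smul] at h
    simpa using DFunLike.congr_fun h x
  refine ⟨affComp 1 (π / 2) χ, fun x => ?_, fun h => hℓ ?_, ?_, ?_⟩
  · have h := hχ (x + π / 2)
    simpa [add_right_comm] using h
  · ext x
    simpa using DFunLike.congr_fun h (x - π / 2)
  · rw [ince_affComp_one_pi_div_two, hχlam, map_smul]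
  · ext x
    have hshift := hχ (x - π / 2)
    have hrefl := hχε (x - π / 2)
    have hsq : (-1 : ℝ) ^ N * (-1) ^ N = 1 := by rw [← mul_pow]; norm_num
    rw [show x - π / 2 + π = x + π / 2 by ring] at hshift
    rw [neg_sub, pow_succ] at hrefl
    simp only [Smooth.affComp_apply, Smooth.smul_apply, neg_one_mul, one_mul, add_zero,
      neg_add_eq_sub]
    linear_combination ε * hshift + (-1) ^ N * hrefl - χ (π / 2 - x) * hsq

theorem finrank_eigenspace_whittakerHill_eq_two {a μ : ℝ}
    (hne : eigenspace (hill N (whittakerHill a N)) μ ≠ ⊥)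
    (hle : eigenspace (hill N (whittakerHill a N)) μ ≤ (weightedTrigPoly (gauge a) N)ᗮ) :
    finrank ℝ (eigenspace (hill N (whittakerHill a N)) μ) = 2 := by
  obtain ⟨f, hf, hf0, ε, hε, hfε⟩ :=
    exists_affComp_neg_one_eq_smul (affComp_neg_one_whittakerHill a N) hne
  let φ := gauge (-a) * f
  have hfφ : gauge a * φ = f := by rw [← mul_assoc, gauge_mul_gauge_neg, one_mul]
  have hφ : φ ∈ floquet N := by simpa using floquet.mul_mem (gauge_mem_floquet (-a)) f.2
  have hφN : φ ∉ trigPoly ℝ N := fun hq =>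
    hf0 <| inner_self_eq_zero.1 <| hle hf f (mem_weightedTrigPoly.2 ⟨φ, hq, hfφ⟩)
  have hlam : ince a N φ = (μ + 2 * a ^ 2) • φ := by
    rw [← schrodinger_gauge_mul_eq_smul_iff, hfφ]
    exact mem_eigenspace_hill.1 hf
  have hφε : affComp (-1) 0 φ = ε • φ := by
    rw [map_mul, affComp_neg_one_gauge, hfε, mul_smul_comm]
  obtain ⟨ψ, hψ, hψ0, hψlam, hψε⟩ := exists_ince_neg_eq_smul hφ hlam hφε hφN
  let g : floquet N := ⟨gauge (-a) * ψ, by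
    simpa using floquet.mul_mem (gauge_mem_floquet (-a)) hψ⟩
  have hg : g ∈ eigenspace (hill N (whittakerHill a N)) μ := by
    rw [mem_eigenspace_hill, ← whittakerHill_neg, schrodinger_gauge_mul_eq_smul_iff, neg_sq]
    exact hψlam
  have hg0 : g ≠ 0 := fun h => hψ0 <| by
    have h' : gauge (-a) * ψ = 0 := congrArg Subtype.val h
    rw [← one_mul ψ, ← gauge_mul_gauge_neg a, mul_assoc, h', mul_zero]
  refine finrank_eigenspace_hill_eq_two hf hg hf0 hg0 hε hfε ?_
  rw [map_mul, affComp_neg_one_gauge, hψε, mul_smul_comm]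

end Coexistence

section Gaps

open Module Module.End

variable {N : ℕ}

/-- The common form of `IsPerEF` (even `N`) and `IsSemiEF` (odd `N`). -/
def IsFloquetEF (N : ℕ) (v : ℝ → ℝ) (lam : ℝ) (f : ℝ → ℝ) : Prop :=
  ContDiff ℝ 2 f ∧ (∀ x, -(deriv (deriv f) x) + v x * f x = lam * f x) ∧
    ∀ x, f (x + π) = (-1) ^ N * f x

lemma isFloquetEF_two_mul (n : ℕ) : IsFloquetEF (2 * n) = IsPerEF := by
  ext v lam f
  simp [IsFloquetEF, IsPerEF]

lemma isFloquetEF_two_mul_add_one (n : ℕ) : IsFloquetEF (2 * n + 1) = IsSemiEF := by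
  ext v lam f
  simp [IsFloquetEF, IsSemiEF, pow_succ]

lemma isFloquetEF_iff_exists {v : floquet 0} {μ : ℝ} {f : ℝ → ℝ} :
    IsFloquetEF N (v : Smooth ℝ) μ f ↔
      ∃ g ∈ eigenspace (hill N v) μ, ⇑(g : Smooth ℝ) = f := by
  constructor
  · rintro ⟨hf, heq, hper⟩
    have hsol : IsSolution (fun x => (v : Smooth ℝ) x - μ) f :=
      ⟨hf, fun x => by linear_combination -heq x⟩
    let g : Smooth ℝ := .mk f (hsol.contDiff_infty (v.1.contDiff.sub contDiff_const))
    refine ⟨⟨g, hper⟩, mem_eigenspace_hill.2 <| Smooth.ext fun x => ?_, rfl⟩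
    exact (neg_add_eq_sub _ _).symm.trans (heq x)
  · rintro ⟨g, hg, rfl⟩
    refine ⟨contDiff_infty.1 g.1.contDiff 2, fun x => ?_, g.2⟩
    exact (neg_add_eq_sub _ _).trans (DFunLike.congr_fun (mem_eigenspace_hill.1 hg) x)

lemma finrank_span_isFloquetEF (v : floquet 0) (μ : ℝ) :
    finrank ℝ (Submodule.span ℝ {f | IsFloquetEF N (v : Smooth ℝ) μ f}) =
      finrank ℝ (eigenspace (hill N v) μ) := by
  let toFun : floquet N →ₗ[ℝ] ℝ → ℝ :=
    { toFun g := (g : Smooth ℝ)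
      map_add' _ _ := rfl
      map_smul' _ _ := rfl }
  have hinj : Function.Injective toFun := DFunLike.coe_injective.comp Subtype.val_injective
  have hset : {f | IsFloquetEF N (v : Smooth ℝ) μ f} = (eigenspace (hill N v) μ).map toFun :=
    Set.ext fun f => isFloquetEF_iff_exists
  rw [hset, Submodule.span_eq]
  exact (Submodule.equivMapOfInjective toFun hinj _).finrank_eq.symm

/-- The common form of `EnumPer` (even `N`) and of `EnumSemi` (odd `N`, indices shifted to start
at `0`). -/
structure IsFloquetEnum (N : ℕ) (v : ℝ → ℝ) (s : ℕ → ℝ) : Prop where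
  monotone : Monotone s
  exists_ne_zero : ∀ k, ∃ f, f ≠ 0 ∧ IsFloquetEF N v (s k) f
  card_eq : ∀ lam, Nat.card {k // s k = lam} =
    finrank ℝ (Submodule.span ℝ {f | IsFloquetEF N v lam f})

lemma isFloquetEnum_of_enumPer {v : ℝ → ℝ} {s : ℕ → ℝ} (h : EnumPer v s) (n : ℕ) :
    IsFloquetEnum (2 * n) v s := by
  obtain ⟨hmono, hne, hcard⟩ := h
  rw [← isFloquetEF_two_mul n] at hne
  exact ⟨hmono, hne, fun lam => by rw [hcard, isFloquetEF_two_mul, perMult]⟩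

lemma isFloquetEnum_of_enumSemi {v : ℝ → ℝ} {s : ℕ → ℝ} (h : EnumSemi v s) (n : ℕ) :
    IsFloquetEnum (2 * n + 1) v fun k => s (k + 1) := by
  obtain ⟨hmono, hne, hcard⟩ := h
  refine ⟨fun i j hij => hmono i.succ_pos j.succ_pos (by omega), fun k => ?_, fun lam => ?_⟩
  · rw [isFloquetEF_two_mul_add_one]
    exact hne _ k.succ_pos
  · rw [isFloquetEF_two_mul_add_one, ← semiMult, ← hcard]
    exact Nat.card_congr
      { toFun k := ⟨k + 1, k.1.succ_pos, k.2⟩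
        invFun k := ⟨k - 1, by rw [Nat.sub_add_cancel k.2.1, k.2.2]⟩
        left_inv k := by simp
        right_inv k := Subtype.ext (Nat.sub_add_cancel k.2.1) }

theorem IsFloquetEnum.eq_succ {a : ℝ} {s : ℕ → ℝ}
    (hs : IsFloquetEnum N (whittakerHill a N : Smooth ℝ) s) (k : ℕ) :
    s (N + 1 + 2 * k) = s (N + 1 + 2 * k + 1) := by
  have hcard : ∀ μ, Nat.card {k // s k = μ} =
      finrank ℝ (eigenspace (hill N (whittakerHill a N)) μ) := fun μ =>
    (hs.card_eq μ).trans (finrank_span_isFloquetEF _ μ)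
  have hne : ∀ k, eigenspace (hill N (whittakerHill a N)) (s k) ≠ ⊥ := fun k h => by
    obtain ⟨f, hf0, hf⟩ := hs.exists_ne_zero k
    obtain ⟨g, hg, rfl⟩ := isFloquetEF_iff_exists.1 hf
    rw [h, Submodule.mem_bot] at hg
    exact hf0 (by rw [hg]; rfl)
  obtain ⟨Λ, hsum, hΛ, hnot⟩ := exists_finset_eigenvalues (gauge_mem_floquet a) (gauge_pos a)
    (weightedTrigPoly_gauge_mem_invtSubmodule a N)
  simp only [← hcard] at hsum hΛ
  rw [← hsum]
  exact eq_succ_of_card_fiber_eq_two_of_notMem hs.monotone hΛ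
    (fun k hk => (hnot _ hk (hne k)).2)
    (fun k hk => (hcard _).trans <|
      finrank_eigenspace_whittakerHill_eq_two (hne k) (hnot _ hk (hne k)).1) k

lemma exists_eq_whittakerHill {B C : ℝ} (hC : 0 < C) {m : ℝ}
    (h : B / (4 * √(2 * C)) = (m + 1) / 2 ∨ B / (4 * √(2 * C)) = -((m + 1) / 2)) :
    ∃ a, (fun x => -(B * Real.cos (2 * x) + C * Real.cos (4 * x))) =
      (whittakerHill a m : Smooth ℝ) := by
  have hsq : √(2 * C) ^ 2 = 2 * C := Real.sq_sqrt (by positivity)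
  have hpos : 4 * √(2 * C) ≠ 0 := by positivity
  have hex : ∃ a, B = 4 * a * (m + 1) ∧ C = 2 * a ^ 2 := by
    rcases h with h | h <;> rw [div_eq_iff hpos] at h
    · exact ⟨√(2 * C) / 2, by linear_combination h, by linear_combination -hsq / 2⟩
    · exact ⟨-(√(2 * C) / 2), by linear_combination h, by linear_combination -hsq / 2⟩
  obtain ⟨a, rfl, rfl⟩ := hex
  exact ⟨a, funext fun x => (whittakerHill_apply a m x).symm⟩

end Gaps

end WhittakerHill

theorem stmt10 (B C : ℝ) (hC : 0 < C) (lamP lamM : ℕ → ℝ)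
    (hP : EnumPer (fun x => -(B * Real.cos (2 * x) + C * Real.cos (4 * x))) lamP)
    (hM : EnumSemi (fun x => -(B * Real.cos (2 * x) + C * Real.cos (4 * x))) lamM) :
    (∀ n : ℕ,
      (B / (4 * Real.sqrt (2 * C)) = (n : ℝ) + 1 / 2 ∨
        B / (4 * Real.sqrt (2 * C)) = -((n : ℝ) + 1 / 2)) →
      ∀ m : ℕ, n < m → gapLen lamP lamM (2 * m) = 0) ∧
    (∀ n : ℕ,
      (B / (4 * Real.sqrt (2 * C)) = (n : ℝ) + 1 ∨
        B / (4 * Real.sqrt (2 * C)) = -((n : ℝ) + 1)) →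
      ∀ m : ℕ, n + 2 ≤ m → gapLen lamP lamM (2 * m - 1) = 0) := by
  constructor
  · intro n hn m hm
    obtain ⟨a, ha⟩ := WhittakerHill.exists_eq_whittakerHill (m := (2 * n : ℕ)) hC
      (by convert hn using 3 <;> push_cast <;> ring)
    rw [ha] at hP
    obtain ⟨k, rfl⟩ := Nat.exists_eq_add_of_le (Nat.succ_le_of_lt hm)
    have hgap := (WhittakerHill.isFloquetEnum_of_enumPer hP n).eq_succ k
    rw [gapLen, if_neg (by simp), show 2 * (n.succ + k) - 1 = 2 * n + 1 + 2 * k by omega, hgap,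
      show 2 * (n.succ + k) = 2 * n + 1 + 2 * k + 1 by omega, sub_self]
  · intro n hn m hm
    obtain ⟨a, ha⟩ := WhittakerHill.exists_eq_whittakerHill (m := (2 * n + 1 : ℕ)) hC
      (by convert hn using 3 <;> push_cast <;> ring)
    rw [ha] at hM
    obtain ⟨k, rfl⟩ := Nat.exists_eq_add_of_le hm
    have hgap := (WhittakerHill.isFloquetEnum_of_enumSemi hM n).eq_succ k
    have hindex : 2 * (n + 2 + k) - 1 = 2 * n + 1 + 1 + 2 * k + 1 := by omega
    rw [gapLen, hindex, if_pos ⟨n + 1 + k, by ring⟩, hgap, sub_self]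
end
end

section
/- For every positive integer n, the sum over all integers i with i ≡ n (mod 2) and i ∉ {n, −n} of 1/|n² − i²| satisfies Σ_i 1/|n² − i²| ≤ (1 + log n)/n. -/
open Real

/-!
Writing `i = n + 2k` turns `|n² - i²|` into `4|k(k + n)|` with `k ∉ {0, -n}`. On each of the
half-lines `k > 0` and `k < -n`, the partial fraction decomposition
`1 / (k(k + n)) = (1/k - 1/(k + n)) / n` telescopes with step `n` and gives `H_n / n`. In the gap
`-n < k < 0` it becomes `1 / (j(n - j)) = (1/j + 1/(n - j)) / n` with `j = -k`, which sums to
`2 H_{n-1} / n`. The series therefore has the exact value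
`(H_n + H_{n-1}) / (2n) = (H_n - 1/(2n)) / n`, and `H_n ≤ 1 + log n`.
-/

open Filter Finset Topology

theorem sum_range_sub_shift {G : Type*} [AddCommGroup G] (f : ℕ → G) (n N : ℕ) :
    ∑ i ∈ range N, (f i - f (i + n)) = ∑ i ∈ range n, f i - ∑ i ∈ range n, f (N + i) := by
  have hn := sum_range_add f n N
  have hN := sum_range_add f N n
  rw [add_comm n N, hN] at hn
  simp only [sum_sub_distrib, add_comm _ n]
  rw [sub_eq_sub_iff_add_eq_add, hn]

theorem tendsto_sum_range_sub_shift {G : Type*} [AddCommGroup G] [TopologicalSpace G]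
    [IsTopologicalAddGroup G] {f : ℕ → G} (hf : Tendsto f atTop (𝓝 0)) (n : ℕ) :
    Tendsto (fun N ↦ ∑ i ∈ range N, (f i - f (i + n))) atTop (𝓝 (∑ i ∈ range n, f i)) := by
  have htail : Tendsto (fun N ↦ ∑ i ∈ range n, f (N + i)) atTop (𝓝 0) := by
    simpa using tendsto_finsetSum (range n) fun i _ ↦ hf.comp (tendsto_add_atTop_nat i)
  simpa only [sum_range_sub_shift, sub_zero] using tendsto_const_nhds.sub htail

theorem hasSum_sub_shift_of_antitone {f : ℕ → ℝ} (hanti : Antitone f)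
    (hf : Tendsto f atTop (𝓝 0)) (n : ℕ) :
    HasSum (fun i ↦ f i - f (i + n)) (∑ i ∈ range n, f i) :=
  (hasSum_iff_tendsto_nat_of_nonneg (fun i ↦ sub_nonneg.2 (hanti (i.le_add_right n))) _).2
    (tendsto_sum_range_sub_shift hf n)

theorem sum_range_one_div_add_one {K : Type*} [DivisionRing K] [CharZero K] (n : ℕ) :
    ∑ i ∈ range n, 1 / ((i : K) + 1) = harmonic n := by
  simp [harmonic]

theorem hasSum_one_div_mul_add {n : ℕ} (hn : n ≠ 0) :
    HasSum (fun m : ℕ ↦ 1 / (((m : ℝ) + 1) * (m + 1 + n))) (harmonic n / n) := by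
  have hanti : Antitone fun m : ℕ ↦ 1 / ((m : ℝ) + 1) :=
    fun _ _ h ↦ Nat.one_div_le_one_div h
  have hsum := (hasSum_sub_shift_of_antitone hanti
    tendsto_one_div_add_atTop_nhds_zero_nat n).div_const (n : ℝ)
  rw [sum_range_one_div_add_one] at hsum
  refine hsum.congr_fun fun m ↦ ?_
  push_cast
  field_simp
  ring

theorem sum_range_one_div_mul_sub {K : Type*} [Field K] [CharZero K] (p : ℕ) :
    ∑ k ∈ range p, 1 / (((k : K) + 1) * (p - k)) = 2 * (harmonic p : K) / (p + 1) := by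
  have hreflect : ∑ k ∈ range p, 1 / ((p : K) - k) = harmonic p := by
    rw [← sum_range_one_div_add_one, ← sum_range_reflect]
    refine sum_congr rfl fun k hk ↦ ?_
    have hk : k + 1 ≤ p := mem_range.1 hk
    rw [Nat.sub_sub, add_comm 1 k, Nat.cast_sub hk]
    push_cast
    ring
  calc
    _ = ∑ k ∈ range p, (1 / ((k : K) + 1) + 1 / (p - k)) / (p + 1) := by
      refine sum_congr rfl fun k hk ↦ ?_
      have hk : (p : K) - k ≠ 0 := sub_ne_zero.2 (Nat.cast_injective.ne (mem_range.1 hk).ne')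
      have hk' : (k : K) + 1 ≠ 0 := k.cast_add_one_ne_zero
      have hp : (p : K) + 1 ≠ 0 := p.cast_add_one_ne_zero
      field_simp
      ring
    _ = 2 * (harmonic p : K) / (p + 1) := by
      rw [← sum_div, sum_add_distrib, sum_range_one_div_add_one, hreflect, two_mul]

-- The last term is `1 / 0 = 0`.
theorem sum_range_one_div_abs_mul_sub {n : ℕ} (hn : n ≠ 0) :
    ∑ m ∈ range n, 1 / |((m : ℝ) + 1) * (n - (m + 1))| = 2 * (harmonic n - 1 / n) / n := by
  obtain ⟨p, rfl⟩ := Nat.exists_eq_succ_of_ne_zero hn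
  have hterm : ∀ m ∈ range p,
      1 / |((m : ℝ) + 1) * ((p + 1 : ℕ) - (m + 1))| = 1 / (((m : ℝ) + 1) * (p - m)) := by
    intro m hm
    have hm : (0 : ℝ) < p - m := sub_pos.2 (Nat.cast_lt.2 (mem_range.1 hm))
    rw [Nat.cast_succ, add_sub_add_right_eq_sub, abs_of_pos (by positivity)]
  have hlast : 1 / |((p : ℝ) + 1) * ((p + 1 : ℕ) - (p + 1))| = 0 := by simp
  rw [sum_range_succ, hlast, sum_congr rfl hterm, sum_range_one_div_mul_sub, harmonic_succ]
  push_cast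
  ring

-- The terms `k = 0` and `k = -n` are `1 / 0 = 0`, so the sum is really over `ℤ \ {0, -n}`.
theorem hasSum_int_one_div_abs_mul_add {n : ℕ} (hn : n ≠ 0) :
    HasSum (fun k : ℤ ↦ 1 / |(k : ℝ) * (k + n)|) ((4 * harmonic n - 2 / n) / n) := by
  set f : ℤ → ℝ := fun k ↦ 1 / |(k : ℝ) * (k + n)| with hf
  have hright : HasSum (fun m : ℕ ↦ f (m + 1)) (harmonic n / n) := by
    refine (hasSum_one_div_mul_add hn).congr_fun fun m ↦ ?_
    simp only [hf]
    push_cast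
    rw [abs_of_pos (by positivity)]
  have hleft : HasSum (fun m : ℕ ↦ f (-((m + n : ℕ) + 1))) (harmonic n / n) := by
    refine (hasSum_one_div_mul_add hn).congr_fun fun m ↦ ?_
    simp only [hf]
    push_cast
    rw [← abs_of_pos (by positivity : 0 < ((m : ℝ) + 1) * (m + 1 + n))]
    ring_nf
  have hgap : ∑ m ∈ range n, f (-(m + 1)) = 2 * (harmonic n - 1 / n) / n := by
    rw [← sum_range_one_div_abs_mul_sub hn]
    refine sum_congr rfl fun m _ ↦ ?_
    simp only [hf]
    rw [← abs_neg]
    push_cast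
    ring_nf
  have hzero : f 0 = 0 := by simp [hf]
  convert hright.of_add_one_of_neg_add_one (hleft.sum_range_add (f := fun m : ℕ ↦ f (-(m + 1))))
    using 1
  rw [hgap, hzero]
  ring

theorem hasSum_one_div_abs_sq_sub_sq {n : ℕ} (hn : n ≠ 0) :
    HasSum (fun i : {i : ℤ // (2 : ℤ) ∣ (i - (n : ℤ)) ∧ i ≠ (n : ℤ) ∧ i ≠ -(n : ℤ)} ↦
      1 / |(n : ℝ) ^ 2 - (i.1 : ℝ) ^ 2|) ((harmonic n - 1 / (2 * n)) / n) := by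
  let half : {i : ℤ // (2 : ℤ) ∣ (i - (n : ℤ)) ∧ i ≠ (n : ℤ) ∧ i ≠ -(n : ℤ)} → ℤ :=
    fun i ↦ (i.1 - n) / 2
  have hhalf (i) : i.1 = n + 2 * half i := by
    rw [Int.mul_ediv_cancel' i.2.1, add_sub_cancel]
  have hinj : Function.Injective half := fun i j hij ↦
    Subtype.ext (by rw [hhalf i, hhalf j, hij])
  have hsupp : ∀ k ∉ Set.range half, 1 / |(k : ℝ) * (k + n)| = 0 := by
    intro k hk
    have hk : k = 0 ∨ k + n = 0 := by
      by_contra! hne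
      exact hk ⟨⟨n + 2 * k, by omega, by omega, by omega⟩, by simp [half]⟩
    have hk : (k : ℝ) * (k + n) = 0 := mul_eq_zero.2 (by exact_mod_cast hk)
    rw [hk, abs_zero, div_zero]
  have hsum := ((hinj.hasSum_iff hsupp).2 (hasSum_int_one_div_abs_mul_add hn)).div_const 4
  have hvalue : ((harmonic n : ℝ) - 1 / (2 * n)) / n = (4 * harmonic n - 2 / n) / n / 4 := by
    ring
  rw [hvalue]
  refine hsum.congr_fun fun i ↦ ?_
  have hi : (n : ℝ) ^ 2 - (i.1 : ℝ) ^ 2 = -((half i : ℝ) * (half i + n) * 4) := by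
    rw [hhalf i]
    push_cast
    ring
  rw [hi, abs_neg, abs_mul, Nat.abs_ofNat, Function.comp_apply, div_div]

theorem stmt15 (n : ℕ) (hn : 0 < n) :
    Summable (fun i : {i : ℤ // (2 : ℤ) ∣ (i - (n : ℤ)) ∧ i ≠ (n : ℤ) ∧ i ≠ -(n : ℤ)} =>
      1 / |(n : ℝ) ^ 2 - (i.1 : ℝ) ^ 2|) ∧
    ∑' i : {i : ℤ // (2 : ℤ) ∣ (i - (n : ℤ)) ∧ i ≠ (n : ℤ) ∧ i ≠ -(n : ℤ)},
        1 / |(n : ℝ) ^ 2 - (i.1 : ℝ) ^ 2| ≤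
      (1 + Real.log n) / n := by
  have hsum := hasSum_one_div_abs_sq_sub_sq hn.ne'
  refine ⟨hsum.summable, ?_⟩
  calc
    _ = ((harmonic n : ℝ) - 1 / (2 * n)) / n := hsum.tsum_eq
    _ ≤ (harmonic n : ℝ) / n := by gcongr; exact sub_le_self _ (by positivity)
    _ ≤ (1 + Real.log n) / n := by gcongr; exact harmonic_le_one_add_log n
end

section
/- Let b, c, q, m1, m2 ∈ ℝ with q > 0 and c ≠ 0, and define V : ℤ → ℝ by V(2) = V(−2) = (b/2)·q^{m1}, V(4) = V(−4) = (c/2)·q^{m2}, and V(m) = 0 otherwise. Set K = 40·(|b/2|·q^{m1} + |c/2|·q^{m2} + |b²/(2c)|·q^{2m1−m2}). Then there exists a positive integer n_1 such that for every integer n ≥ n_1, every ξ ∈ X⁺, and every real z with |z| ≤ 1, the family (|B_n(x,z)|)_{x ∈ X_ξ} is summable and Σ_{x ∈ X_ξ} |B_n(x,z)| ≤ |B_n(ξ,z)|·K·(log n)/n. -/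
open Real

noncomputable section

/-- The `s`-th interior vertex `j_{s+1} = -n + x_1 + ⋯ + x_{s+1}` of a walk starting at `-n`
with steps `step 0, …, step ν`. -/
def vertexOf (n : ℕ) {ν : ℕ} (step : Fin (ν + 1) → ℤ) (s : Fin ν) : ℤ :=
  -(n : ℤ) + ∑ k ∈ Finset.univ.filter (fun k : Fin (ν + 1) => (k : ℕ) ≤ (s : ℕ)), step k

/-- A walk from `-n` to `n` with `ν + 1` steps, each equal to `±2` or `±4`, whose interior
vertices avoid `±n`.  The set of all such walks is `X`. -/
structure Walk (n : ℕ) where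
  ν : ℕ
  step : Fin (ν + 1) → ℤ
  step_mem : ∀ k, step k = -4 ∨ step k = -2 ∨ step k = 2 ∨ step k = 4
  sum_eq : -(n : ℤ) + ∑ k, step k = (n : ℤ)
  vertex_ne : ∀ s : Fin ν, vertexOf n step s ≠ (n : ℤ) ∧ vertexOf n step s ≠ -(n : ℤ)

/-- A walk belongs to `X⁺` iff all its steps equal `2` or `4`. -/
def Walk.IsPos {n : ℕ} (w : Walk n) : Prop := ∀ k, w.step k = 2 ∨ w.step k = 4

/-- The vertex sequence of `ξ` is a subsequence of the vertex sequence of `x`. -/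
def VertexSubseq (n : ℕ) (ξ x : Walk n) : Prop :=
  ∃ e : Fin ξ.ν → Fin x.ν, StrictMono e ∧
    ∀ s, vertexOf n x.step (e s) = vertexOf n ξ.step s

/-- The weight `B_n(x, z)` of a walk. -/
def Bwt (V : ℤ → ℝ) (n : ℕ) (z : ℝ) (x : Walk n) : ℝ :=
  (∏ k, V (x.step k)) /
    ∏ s : Fin x.ν, ((n : ℝ) ^ 2 - (vertexOf n x.step s : ℝ) ^ 2 + z)

/-!
Weighting a walk at its starting vertex as well (with the value `1 / n` at `±n`) only multiplies
`|B_n(x, z)|` by `1 / n`, but makes the weight multiplicative under concatenation. A walk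
`x ∈ X_ξ` arises from `ξ` by replacing each step of `ξ` with a detour having the same ends, so the
total weight of `{ξ} ∪ X_ξ` is at most a product, over the steps of `ξ`, of sums over detours.

Let `β`, `γ` be the absolute values of the weights of the steps `±2`, `±4`. The detours from the
vertex `u` replacing one step add a relative error `ε(u)` to the weight of that step. Those with two
steps contribute at most `(γ + β² / γ)` times the vertex weights next to `u`. Those with at least
three contribute `O(1 / n²)` by a geometric series, since the vertex weights are at most `1 / n`; a
detour replacing a step `2` itself contains a step `±2`, which keeps the error relative even for
small `β`.

By partial fractions the vertex weights along `-n, -n + 2, …, n` add up to `O(log n / n)`.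
Hence so does `∑ ε`, and `∏ (1 + ε) ≤ 1 + 2 ∑ ε` as soon as this sum is at most `1`.
-/

open Filter Topology
open scoped NNReal ENNReal

section PathWeight

variable {M R : Type*} [AddMonoid M] [CommMonoid R]

/-- The weight of the path that starts at `u` and takes the steps listed, where a step `x` taken
from the vertex `v` contributes `W v x`. Thus the first vertex is weighted and the last is not,
which makes the weight multiplicative under concatenation. -/
def pathWeight (W : M → M → R) : M → List M → R
  | _, [] => 1
  | u, x :: l => W u x * pathWeight W (u + x) l

lemma pathWeight_append (W : M → M → R) (u : M) (l l' : List M) :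
    pathWeight W u (l ++ l') = pathWeight W u l * pathWeight W (u + l.sum) l' := by
  induction l generalizing u with
  | nil => simp [pathWeight]
  | cons x l ih => simp [pathWeight, ih, add_assoc, mul_assoc]

lemma pathWeight_mul (W W' : M → M → R) (u : M) (l : List M) :
    pathWeight (fun v x => W v x * W' v x) u l = pathWeight W u l * pathWeight W' u l := by
  induction l generalizing u with
  | nil => simp [pathWeight]
  | cons x l ih => simp only [pathWeight, ih, mul_mul_mul_comm]

lemma pathWeight_ofFn (W : M → M → R) (u : M) {m : ℕ} (s : Fin m → M) :
    pathWeight W u (List.ofFn s) = ∏ k : Fin m, W (u + ((List.ofFn s).take k).sum) (s k) := by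
  induction m generalizing u with
  | zero => simp [pathWeight]
  | succ m ih => simp [pathWeight, ih, List.ofFn_succ, Fin.prod_univ_succ, add_assoc]

lemma pathWeight_mono {W W' : M → M → ℝ≥0∞} {l : List M} (h : ∀ v, ∀ x ∈ l, W v x ≤ W' v x)
    (u : M) : pathWeight W u l ≤ pathWeight W' u l := by
  induction l generalizing u with
  | nil => rfl
  | cons x l ih =>
    exact mul_le_mul' (h u x List.mem_cons_self)
      (ih (fun v y hy => h v y (List.mem_cons_of_mem x hy)) (u + x))

/-- The total weight of all paths from `u` to `u + y`, whatever their length: the single step `y`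
together with all the detours that can replace it. -/
def detourWeight (W : M → M → ℝ≥0∞) (u y : M) : ℝ≥0∞ :=
  ∑' l : {l : List M // l.sum = y}, pathWeight W u l

lemma pathWeight_detourWeight (W : M → M → ℝ≥0∞) (u : M) (ys : List M) :
    pathWeight (detourWeight W) u ys =
      ∑' L : {L : List (List M) // L.map List.sum = ys}, pathWeight W u L.1.flatten := by
  induction ys generalizing u with
  | nil =>
    have : Unique {L : List (List M) // L.map List.sum = []} :=
      ⟨⟨⟨[], rfl⟩⟩, fun L => Subtype.ext (List.map_eq_nil_iff.1 L.2)⟩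
    rw [tsum_fintype, Fintype.sum_unique,
      List.map_eq_nil_iff.1 (default : {L : List (List M) // L.map List.sum = []}).2]
    rfl
  | cons y ys ih =>
    let consBlock (p : {l : List M // l.sum = y} × {L : List (List M) // L.map List.sum = ys}) :
        {L : List (List M) // L.map List.sum = y :: ys} :=
      ⟨p.1.1 :: p.2.1, by simp [p.1.2, p.2.2]⟩
    have hbij : Function.Bijective consBlock := by
      constructor
      · rintro ⟨⟨l, hl⟩, ⟨L, hL⟩⟩ ⟨⟨l', hl'⟩, ⟨L', hL'⟩⟩ h
        simpa [consBlock] using h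
      · rintro ⟨_ | ⟨l, L⟩, h⟩
        · simp at h
        · obtain ⟨hl, hL⟩ := List.cons.inj h
          exact ⟨(⟨l, hl⟩, ⟨L, hL⟩), rfl⟩
    calc pathWeight (detourWeight W) u (y :: ys)
        = ∑' (l : {l : List M // l.sum = y}) (L : {L : List (List M) // L.map List.sum = ys}),
            pathWeight W u l * pathWeight W (u + y) L.1.flatten := by
          simp only [pathWeight, ih, ENNReal.tsum_mul_left, ENNReal.tsum_mul_right, detourWeight]
      _ = ∑' p, pathWeight W u (consBlock p).1.flatten := by
          rw [ENNReal.tsum_prod']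
          refine tsum_congr fun l => tsum_congr fun L => ?_
          simp only [consBlock, List.flatten_cons, pathWeight_append, l.2]
      _ = _ := (Equiv.ofBijective consBlock hbij).tsum_eq fun L => pathWeight W u L.1.flatten

end PathWeight

section KernelPow

variable {M : Type*} [AddCommGroup M] [DecidableEq M]

/-- The total weight of all paths from `u` to `u + y` with exactly `k` steps. -/
def kernelPow (W : M → M → ℝ≥0∞) : ℕ → M → M → ℝ≥0∞
  | 0, _, y => if y = 0 then 1 else 0
  | k + 1, u, y => ∑' x, W u x * kernelPow W k (u + x) (y - x)

lemma kernelPow_one (W : M → M → ℝ≥0∞) (u y : M) : kernelPow W 1 u y = W u y := by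
  simp only [kernelPow, sub_eq_zero, mul_ite, mul_one, mul_zero]
  exact tsum_ite_eq' y (W u)

lemma kernelPow_two (W : M → M → ℝ≥0∞) (u y : M) :
    kernelPow W 2 u y = ∑' x, W u x * W (u + x) (y - x) := by
  rw [kernelPow]
  simp only [kernelPow_one]

lemma kernelPow_eq_tsum (W : M → M → ℝ≥0∞) (k : ℕ) (u y : M) :
    kernelPow W k u y =
      ∑' s : Fin k → M, if ∑ i, s i = y then pathWeight W u (List.ofFn s) else 0 := by
  induction k generalizing u y with
  | zero => simp [kernelPow, pathWeight, eq_comm]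
  | succ k ih =>
    rw [← (Fin.consEquiv fun _ : Fin (k + 1) => M).tsum_eq, ENNReal.tsum_prod', kernelPow]
    refine tsum_congr fun x => ?_
    rw [ih, ← ENNReal.tsum_mul_left]
    refine tsum_congr fun s => ?_
    simp [Fin.consEquiv, Fin.sum_univ_succ, List.ofFn_succ, pathWeight, eq_sub_iff_add_eq']

lemma detourWeight_eq_tsum_kernelPow (W : M → M → ℝ≥0∞) (u y : M) :
    detourWeight W u y = ∑' k, kernelPow W k u y := by
  calc detourWeight W u y
      = ∑' l : List M, if l.sum = y then pathWeight W u l else 0 := by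
        refine (tsum_subtype {l : List M | l.sum = y} (pathWeight W u)).trans ?_
        simp only [Set.indicator_apply, Set.mem_ofPred_eq]
    _ = ∑' k, kernelPow W k u y := by
        rw [← List.equivSigmaTuple.symm.tsum_eq, ENNReal.tsum_sigma']
        refine tsum_congr fun k => ?_
        simp only [kernelPow_eq_tsum, List.equivSigmaTuple, Equiv.coe_fn_symm_mk, List.sum_ofFn]

end KernelPow

lemma exists_blocks_of_sum_take_eq {M : Type*} [AddGroup M] (ys xs : List M) (p : ℕ → ℕ)
    (hp : Monotone p) (h0 : p 0 = 0) (hend : p ys.length = xs.length)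
    (hsum : ∀ i ≤ ys.length, (xs.take (p i)).sum = (ys.take i).sum) :
    ∃ L : List (List M), L.map List.sum = ys ∧ L.flatten = xs := by
  induction ys generalizing xs p with
  | nil => exact ⟨[], rfl, (List.length_eq_zero_iff.1 (hend.symm.trans h0)).symm⟩
  | cons y ys ih =>
    have hfirst : (xs.take (p 1)).sum = y := by simpa using hsum 1 (by simp)
    obtain ⟨L, hL, hflat⟩ := ih (xs.drop (p 1)) (fun i => p (i + 1) - p 1)
      (fun i j hij => Nat.sub_le_sub_right (hp (Nat.succ_le_succ hij)) _) (by simp)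
      (by simpa using congrArg (· - p 1) hend) fun i hi => by
        have h := hsum (i + 1) (Nat.succ_le_succ hi)
        have hsplit : p (i + 1) = p 1 + (p (i + 1) - p 1) := by
          have := hp (Nat.le_add_left 1 i)
          omega
        rw [hsplit, List.take_add, List.sum_append, hfirst, List.take_succ_cons,
          List.sum_cons] at h
        exact add_left_cancel h
    exact ⟨xs.take (p 1) :: L, by simp [hfirst, hL], by simp [hflat]⟩

lemma add_tsum_comp_le_tsum_of_injective {ι κ : Type*} {φ : ι → κ} (hφ : Function.Injective φ)
    {a : κ} (ha : a ∉ Set.range φ) (f : κ → ℝ≥0∞) : f a + ∑' i, f (φ i) ≤ ∑' k, f k := by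
  calc f a + ∑' i, f (φ i) = ∑' k : ({a} : Set κ), f k + ∑' k : Set.range φ, f k := by
        rw [tsum_singleton, tsum_range f hφ]
    _ = ∑' k : ({a} ∪ Set.range φ : Set κ), f k :=
        (ENNReal.summable.tsum_union_disjoint (Set.disjoint_singleton_left.2 ha)
          ENNReal.summable).symm
    _ ≤ ∑' k, f k := ENNReal.tsum_comp_le_tsum_of_injective Subtype.val_injective f

lemma pathWeight_one_add_le_prod {ε : ℤ → ℝ≥0∞} {l : List ℤ} (hl : ∀ x ∈ l, x = 2 ∨ x = 4)
    (u : ℤ) {m : ℕ} (hm : l.sum = 2 * m) :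
    pathWeight (fun v _ => 1 + ε v) u l ≤ ∏ i ∈ Finset.range m, (1 + ε (u + 2 * i)) := by
  induction l generalizing u m with
  | nil => exact Finset.one_le_prod' fun i _ => le_self_add
  | cons x l ih =>
    have hl' : ∀ y ∈ l, y = 2 ∨ y = 4 := fun y hy => hl y (List.mem_cons_of_mem x hy)
    have hnonneg : 0 ≤ l.sum := List.sum_nonneg fun y hy => by have := hl' y hy; omega
    rw [List.sum_cons] at hm
    rw [pathWeight]
    rcases hl x List.mem_cons_self with rfl | rfl
    · obtain ⟨k, rfl⟩ : ∃ k, m = k + 1 := ⟨m - 1, by omega⟩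
      have hle := ih hl' (u + 2) (m := k) (by push_cast at hm; omega)
      rw [Finset.prod_range_succ', mul_comm]
      simp only [Nat.cast_zero, mul_zero, add_zero]
      gcongr
      refine hle.trans_eq (Finset.prod_congr rfl fun i _ => ?_)
      congr 2
      push_cast
      ring
    · obtain ⟨k, rfl⟩ : ∃ k, m = k + 2 := ⟨m - 2, by omega⟩
      have hle := ih hl' (u + 4) (m := k) (by push_cast at hm; omega)
      rw [Finset.prod_range_succ', mul_comm]
      simp only [Nat.cast_zero, mul_zero, add_zero]
      gcongr
      rw [Finset.prod_range_succ']
      refine (hle.trans_eq (Finset.prod_congr rfl fun i _ => ?_)).trans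
        (le_mul_of_one_le_right' le_self_add)
      congr 2
      push_cast
      ring

lemma prod_one_add_le_one_add_two_mul_sum {ι : Type*} (s : Finset ι) {f : ι → ℝ≥0}
    (hf : ∑ i ∈ s, f i ≤ 1) : ∏ i ∈ s, (1 + f i) ≤ 1 + 2 * ∑ i ∈ s, f i := by
  rw [← NNReal.coe_le_coe] at hf ⊢
  push_cast at hf ⊢
  set S : ℝ := ∑ i ∈ s, (f i : ℝ)
  have hS : |S| = S := abs_of_nonneg (Finset.sum_nonneg fun i _ => (f i).2)
  calc ∏ i ∈ s, (1 + (f i : ℝ)) ≤ Real.exp S :=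
        Real.prod_one_add_le_exp_sum s fun i => (f i).2
    _ ≤ 1 + 2 * S := by
        have := (le_abs_self _).trans (Real.abs_exp_sub_one_le (hS.trans_le hf))
        linarith

section Kernel

/-- The absolute value of the step weight `V` on a step `x`: it is `β` on the steps `±2`, `γ` on
the steps `±4`, and all other steps are forbidden. -/
def stepWeight (β γ : ℝ≥0) (x : ℤ) : ℝ≥0 := if |x| = 2 then β else if |x| = 4 then γ else 0

/-- The kernel in which leaving the vertex `u` by the step `x` costs `g u` times the weight
of `x`. -/
def stepKernel (g : ℤ → ℝ≥0) (β γ : ℝ≥0) (u x : ℤ) : ℝ≥0∞ := ↑(g u * stepWeight β γ x)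

variable {g : ℤ → ℝ≥0} {β γ δ : ℝ≥0}

lemma tsum_stepKernel_mul (g : ℤ → ℝ≥0) (β γ : ℝ≥0) (u : ℤ) (f : ℤ → ℝ≥0∞) :
    ∑' x, stepKernel g β γ u x * f x =
      g u * (γ * f (-4) + β * f (-2) + β * f 2 + γ * f 4) := by
  rw [tsum_eq_sum (s := {-4, -2, 2, 4})]
  · calc _ = g u * γ * f (-4) + (g u * β * f (-2) + (g u * β * f 2 + g u * γ * f 4)) := by
          simp [stepKernel, stepWeight]
      _ = _ := by ring
  · intro x hx
    simp only [Finset.mem_insert, Finset.mem_singleton, not_or] at hx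
    have h2 : |x| ≠ 2 := by grind
    have h4 : |x| ≠ 4 := by grind
    simp [stepKernel, stepWeight, h2, h4]

/-- A supersolution for the convolution with `stepWeight β γ`. A path whose total
displacement is not divisible by `4` contains a step `±2`, which the factor `β / (β + γ)`
records. -/
def parityFactor (β γ : ℝ≥0) (y : ℤ) : ℝ≥0 := if 4 ∣ y then 1 else β / (β + γ)

lemma parityFactor_le_one (β γ : ℝ≥0) (y : ℤ) : parityFactor β γ y ≤ 1 := by
  unfold parityFactor
  split_ifs
  · rfl
  · exact div_le_one_of_le₀ le_self_add zero_le

lemma parityFactor_supersolution (hγ : 0 < γ) (y : ℤ) :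
    γ * parityFactor β γ (y - -4) + β * parityFactor β γ (y - -2) + β * parityFactor β γ (y - 2)
      + γ * parityFactor β γ (y - 4) ≤ 4 * (β + γ) * parityFactor β γ y := by
  have hplus : parityFactor β γ (y - -4) = parityFactor β γ y := by simp [parityFactor]
  have hminus : parityFactor β γ (y - 4) = parityFactor β γ y := by simp [parityFactor]
  have hβ : β ≤ (β + γ) * parityFactor β γ y := by
    unfold parityFactor
    split_ifs
    · simp
    · exact (mul_div_cancel₀ β (add_pos_of_nonneg_of_pos zero_le hγ).ne').ge
  calc _ ≤ γ * parityFactor β γ y + β * 1 + β * 1 + γ * parityFactor β γ y := by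
        rw [hplus, hminus]
        gcongr <;> exact parityFactor_le_one β γ _
    _ = 2 * β + 2 * γ * parityFactor β γ y := by ring
    _ ≤ 2 * ((β + γ) * parityFactor β γ y) + 2 * (β + γ) * parityFactor β γ y := by
        gcongr
        exact le_add_self
    _ = _ := by ring

lemma parityFactor_le_div (hγ : 0 < γ) {y : ℤ} (hy : y = 2 ∨ y = 4) :
    parityFactor β γ y ≤ stepWeight β γ y / γ := by
  rcases hy with rfl | rfl
  · calc parityFactor β γ 2 = β / (β + γ) := by norm_num [parityFactor]
      _ ≤ β / γ := by
          gcongr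
          exact le_add_self
      _ = stepWeight β γ 2 / γ := by simp [stepWeight]
  · simp [parityFactor, stepWeight, hγ.ne']

lemma kernelPow_stepKernel_succ_le (hγ : 0 < γ) {k : ℕ} {C : ℝ≥0}
    (h : ∀ v y, kernelPow (stepKernel g β γ) k v y ≤ ↑(parityFactor β γ y * C)) (u y : ℤ) :
    kernelPow (stepKernel g β γ) (k + 1) u y ≤
      ↑(g u * (4 * (β + γ)) * parityFactor β γ y * C) := by
  rw [kernelPow, tsum_stepKernel_mul]
  calc _ ≤ (g u : ℝ≥0∞) * (γ * ↑(parityFactor β γ (y - -4) * C)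
          + β * ↑(parityFactor β γ (y - -2) * C) + β * ↑(parityFactor β γ (y - 2) * C)
          + γ * ↑(parityFactor β γ (y - 4) * C)) := by
        gcongr <;> exact h _ _
    _ = ↑(g u * (γ * parityFactor β γ (y - -4) + β * parityFactor β γ (y - -2)
          + β * parityFactor β γ (y - 2) + γ * parityFactor β γ (y - 4)) * C) := by
        push_cast
        ring
    _ ≤ ↑(g u * (4 * (β + γ) * parityFactor β γ y) * C) := by
        gcongr
        exact parityFactor_supersolution hγ y
    _ = _ := by ring_nf

lemma kernelPow_stepKernel_le (hγ : 0 < γ) (hg : ∀ v, g v ≤ δ) (k : ℕ) (u y : ℤ) :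
    kernelPow (stepKernel g β γ) k u y ≤
      ↑(parityFactor β γ y * (4 * (β + γ) * δ) ^ k) := by
  induction k generalizing u y with
  | zero =>
    by_cases hy : y = 0 <;> simp [kernelPow, parityFactor, hy]
  | succ k ih =>
    refine (kernelPow_stepKernel_succ_le hγ ih u y).trans (ENNReal.coe_le_coe.2 ?_)
    calc g u * (4 * (β + γ)) * parityFactor β γ y * (4 * (β + γ) * δ) ^ k
        ≤ δ * (4 * (β + γ)) * parityFactor β γ y * (4 * (β + γ) * δ) ^ k := by
          gcongr
          exact hg u
      _ = _ := by ring

lemma tsum_kernelPow_stepKernel_add_three_le (hγ : 0 < γ) (hg : ∀ v, g v ≤ δ)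
    (hδ : 4 * (β + γ) * δ ≤ 2⁻¹) (u y : ℤ) :
    ∑' k, kernelPow (stepKernel g β γ) (k + 3) u y ≤
      ((g u * (128 * (β + γ) ^ 3 * δ ^ 2) * parityFactor β γ y : ℝ≥0) : ℝ≥0∞) := by
  set ρ : ℝ≥0 := 4 * (β + γ) * δ with hρ
  set c : ℝ≥0 := g u * (4 * (β + γ)) * parityFactor β γ y * ρ ^ 2 with hc
  have hterm (k : ℕ) : kernelPow (stepKernel g β γ) (k + 3) u y ≤ c * (2⁻¹ : ℝ≥0∞) ^ k := by
    refine (kernelPow_stepKernel_succ_le hγ (kernelPow_stepKernel_le hγ hg (k + 2)) u y).trans ?_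
    calc ((g u * (4 * (β + γ)) * parityFactor β γ y * ρ ^ (k + 2) : ℝ≥0) : ℝ≥0∞)
        = ↑(c * ρ ^ k) := by rw [hc]; ring_nf
      _ ≤ ↑(c * 2⁻¹ ^ k) := by gcongr
      _ = c * (2⁻¹ : ℝ≥0∞) ^ k := by simp [ENNReal.inv_pow]
  calc _ ≤ ∑' k : ℕ, (c : ℝ≥0∞) * (2⁻¹ : ℝ≥0∞) ^ k := ENNReal.tsum_le_tsum hterm
    _ = ↑(c * 2) := by
        rw [ENNReal.tsum_mul_left, ENNReal.tsum_geometric, ENNReal.one_sub_inv_two, inv_inv]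
        simp
    _ = _ := by rw [hc, hρ]; ring_nf

/-- The relative error `ε` at the vertex `u` when a step `2` or `4` is replaced by all its detours.
The first summand accounts for the detours of two steps, the second for the longer ones. -/
def detourError (g : ℤ → ℝ≥0) (β γ δ : ℝ≥0) (u : ℤ) : ℝ≥0 :=
  (γ + β ^ 2 / γ) * (g (u - 2) + g (u + 2) + g (u + 4)) + 128 * (β + γ) ^ 3 / γ * δ ^ 2

lemma kernelPow_two_stepKernel_le (hγ : 0 < γ) (u : ℤ) {y : ℤ} (hy : y = 2 ∨ y = 4) :
    kernelPow (stepKernel g β γ) 2 u y ≤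
      ↑(g u * (stepWeight β γ y * ((γ + β ^ 2 / γ) * (g (u - 2) + g (u + 2) + g (u + 4))))) := by
  have hpairs : γ * (g (u - 4) * stepWeight β γ (y + 4)) + β * (g (u - 2) * stepWeight β γ (y + 2))
      + β * (g (u + 2) * stepWeight β γ (y - 2)) + γ * (g (u + 4) * stepWeight β γ (y - 4)) ≤
      stepWeight β γ y * ((γ + β ^ 2 / γ) * (g (u - 2) + g (u + 2) + g (u + 4))) := by
    rcases hy with rfl | rfl
    · calc _ = β * (g (u - 2) * γ) + γ * (g (u + 4) * β) := by norm_num [stepWeight]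
        _ = β * (γ * (g (u - 2) + g (u + 4))) := by ring
        _ ≤ β * ((γ + β ^ 2 / γ) * (g (u - 2) + g (u + 2) + g (u + 4))) := by
            gcongr
            · exact le_self_add
            · exact le_self_add
    · calc _ = β * (g (u + 2) * β) := by norm_num [stepWeight]
        _ = γ * (β ^ 2 / γ * g (u + 2)) := by field_simp
        _ ≤ γ * ((γ + β ^ 2 / γ) * (g (u - 2) + g (u + 2) + g (u + 4))) := by
            gcongr
            · exact le_add_self
            · exact le_add_self.trans le_self_add
  rw [kernelPow_two, tsum_stepKernel_mul]
  simp only [stepKernel, ← sub_eq_add_neg, sub_neg_eq_add]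
  exact_mod_cast mul_le_mul_right hpairs (g u)

lemma detourWeight_stepKernel_le (hγ : 0 < γ) (hg : ∀ v, g v ≤ δ)
    (hδ : 4 * (β + γ) * δ ≤ 2⁻¹) (u : ℤ) {y : ℤ} (hy : y = 2 ∨ y = 4) :
    detourWeight (stepKernel g β γ) u y ≤
      stepKernel g β γ u y * (1 + (detourError g β γ δ u : ℝ≥0∞)) := by
  have hy0 : y ≠ 0 := by omega
  set s : ℝ≥0 := g (u - 2) + g (u + 2) + g (u + 4) with hs
  rw [detourWeight_eq_tsum_kernelPow, ← Summable.sum_add_tsum_nat_add' (k := 3) ENNReal.summable]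
  simp only [Finset.sum_range_succ, Finset.sum_range_zero, zero_add, kernelPow_one]
  calc _ ≤ 0 + stepKernel g β γ u y + ↑(g u * (stepWeight β γ y * ((γ + β ^ 2 / γ) * s)))
          + ((g u * (128 * (β + γ) ^ 3 * δ ^ 2) * (stepWeight β γ y / γ) : ℝ≥0) : ℝ≥0∞) := by
        gcongr
        · simp [kernelPow, hy0]
        · exact kernelPow_two_stepKernel_le hγ u hy
        · refine (tsum_kernelPow_stepKernel_add_three_le hγ hg hδ u y).trans ?_
          gcongr
          exact parityFactor_le_div hγ hy
    _ = _ := by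
        simp only [stepKernel, detourError, ← hs]
        norm_cast
        field_simp
        ring

lemma pathWeight_detourWeight_stepKernel_le (hγ : 0 < γ) (hg : ∀ v, g v ≤ δ)
    (hδ : 4 * (β + γ) * δ ≤ 2⁻¹) {l : List ℤ} (hl : ∀ x ∈ l, x = 2 ∨ x = 4) (u : ℤ) {m : ℕ}
    (hm : l.sum = 2 * m)
    (hsum : ∑ i ∈ Finset.range m, detourError g β γ δ (u + 2 * i) ≤ 1) :
    pathWeight (detourWeight (stepKernel g β γ)) u l ≤ pathWeight (stepKernel g β γ) u l *
      ↑(1 + 2 * ∑ i ∈ Finset.range m, detourError g β γ δ (u + 2 * i)) := by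
  calc pathWeight (detourWeight (stepKernel g β γ)) u l
      ≤ pathWeight (stepKernel g β γ) u l *
          pathWeight (fun v _ => 1 + (detourError g β γ δ v : ℝ≥0∞)) u l := by
        rw [← pathWeight_mul]
        exact pathWeight_mono
          (fun v x hx => detourWeight_stepKernel_le hγ hg hδ v (hl x hx)) u
    _ ≤ pathWeight (stepKernel g β γ) u l *
          ∏ i ∈ Finset.range m, (1 + (detourError g β γ δ (u + 2 * i) : ℝ≥0∞)) := by
        gcongr
        exact pathWeight_one_add_le_prod hl u hm
    _ ≤ _ := by
        gcongr
        exact_mod_cast prod_one_add_le_one_add_two_mul_sum _ hsum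

end Kernel

section VertexWeight

lemma natCast_lt_abs_sq_sub_sq {n : ℕ} (hn : 2 ≤ n) {j : ℤ} (hj : |j| ≠ n) :
    (n : ℤ) < |(n : ℤ) ^ 2 - j ^ 2| := by
  rw [← sq_abs j]
  have hj0 : 0 ≤ |j| := abs_nonneg j
  rcases lt_or_gt_of_ne hj with h | h
  · refine lt_of_lt_of_le ?_ (le_abs_self _)
    nlinarith
  · refine lt_of_lt_of_le ?_ (neg_le_abs _)
    nlinarith

/-- The absolute value of the factor `1 / (n² - j² + z)` which a walk picks up at its interior
vertex `j`. At the forbidden vertices `j = ±n` the value `1 / n` is chosen: it obeys the bound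
valid elsewhere, and it makes the path weight of a walk equal to `1 / n` times `|B_n(x, z)|`. -/
def vertexWeight (n : ℕ) (z : ℝ) (j : ℤ) : ℝ≥0 :=
  if |j| = n then (n : ℝ≥0)⁻¹ else ‖(n : ℝ) ^ 2 - (j : ℝ) ^ 2 + z‖₊⁻¹

variable {n : ℕ} {z : ℝ}

lemma vertexWeight_le_inv (hn : 2 ≤ n) (hz : |z| ≤ 1) (j : ℤ) :
    vertexWeight n z j ≤ (n : ℝ≥0)⁻¹ := by
  unfold vertexWeight
  split_ifs with h
  · rfl
  · have hgap : ((n : ℝ) + 1) ≤ |(n : ℝ) ^ 2 - (j : ℝ) ^ 2| := by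
      exact_mod_cast natCast_lt_abs_sq_sub_sq hn h
    have hnorm : (n : ℝ) ≤ |(n : ℝ) ^ 2 - (j : ℝ) ^ 2 + z| := by
      have := abs_sub_abs_le_abs_add ((n : ℝ) ^ 2 - (j : ℝ) ^ 2) z
      linarith
    have hpos : (0 : ℝ≥0) < n := by exact_mod_cast (by omega : 0 < n)
    exact inv_anti₀ hpos hnorm

lemma vertexWeight_add_two_le (hz : |z| ≤ 1) (a b : ℕ) :
    (vertexWeight (a + b + 2) z (a - b) : ℝ) ≤ 1 / (2 * (a + 1) * (b + 1)) := by
  have hinterior : |(a : ℤ) - b| ≠ ((a + b + 2 : ℕ) : ℤ) := by grind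
  rw [vertexWeight, if_neg hinterior, NNReal.coe_inv, coe_nnnorm, Real.norm_eq_abs, ← one_div]
  gcongr
  push_cast
  calc (2 * (a + 1) * (b + 1) : ℝ) ≤ 4 * (a + 1) * (b + 1) - 1 := by
        have : (0 : ℝ) ≤ a * b + a + b := by positivity
        linarith
    _ ≤ 4 * (a + 1) * (b + 1) + z := by linarith [neg_le_of_abs_le hz]
    _ = (a + b + 2) ^ 2 - (a - b) ^ 2 + z := by ring
    _ ≤ _ := le_abs_self _

lemma vertexWeight_sub_le (hn : 2 ≤ n) (hz : |z| ≤ 1) {a b : ℕ} (hab : a + b = n + 2) :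
    (vertexWeight n z (a - b) : ℝ) ≤ 2 / n * (1 / (a + 1) + 1 / (b + 1)) := by
  have hn0 : (0 : ℝ) < n := by exact_mod_cast (by omega : 0 < n)
  by_cases hinterior : 2 ≤ a ∧ 2 ≤ b
  · obtain ⟨⟨a, rfl⟩, b, rfl⟩ := hinterior.imp Nat.exists_eq_add_of_le' Nat.exists_eq_add_of_le'
    obtain rfl : n = a + b + 2 := by omega
    have h := vertexWeight_add_two_le hz a b
    push_cast at h ⊢
    rw [add_sub_add_right_eq_sub]
    refine h.trans ?_
    calc (1 / (2 * (a + 1) * (b + 1)) : ℝ)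
        = 2 / (a + b + 2) * (1 / (4 * (a + 1)) + 1 / (4 * (b + 1))) := by field_simp; ring
      _ ≤ _ := by gcongr <;> linarith
  · have hhalf : (1 / 2 : ℝ) ≤ 1 / (a + 1) + 1 / (b + 1) := by
      rcases not_and_or.1 hinterior with h | h
      · have : (a : ℝ) ≤ 1 := by exact_mod_cast Nat.lt_succ_iff.1 (not_le.1 h)
        exact (one_div_le_one_div_of_le (by positivity) (by linarith)).trans
          (le_add_of_nonneg_right (by positivity))
      · have : (b : ℝ) ≤ 1 := by exact_mod_cast Nat.lt_succ_iff.1 (not_le.1 h)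
        exact (one_div_le_one_div_of_le (by positivity) (by linarith)).trans
          (le_add_of_nonneg_left (by positivity))
    calc (vertexWeight n z (a - b) : ℝ) ≤ (n : ℝ)⁻¹ := by
          exact_mod_cast vertexWeight_le_inv hn hz (a - b)
      _ = 2 / n * (1 / 2) := by ring
      _ ≤ _ := by gcongr

lemma sum_one_div_add_one_le (hn : n ≠ 0) :
    ∑ i ∈ Finset.range (n + 3), 1 / ((i : ℝ) + 1) ≤ 4 + Real.log n := by
  have hn1 : (1 : ℝ) ≤ n := by exact_mod_cast Nat.one_le_iff_ne_zero.2 hn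
  calc ∑ i ∈ Finset.range (n + 3), 1 / ((i : ℝ) + 1) = harmonic (n + 3) := by
        simp [harmonic]
    _ ≤ 1 + Real.log (n + 3 : ℕ) := harmonic_le_one_add_log (n + 3)
    _ ≤ 1 + Real.log (4 * n) := by
        gcongr
        push_cast
        linarith
    _ ≤ 4 + Real.log n := by
        rw [Real.log_mul (by norm_num) (by positivity)]
        linarith [Real.log_le_sub_one_of_pos (show (0 : ℝ) < 4 by norm_num)]

lemma sum_vertexWeight_le (hn : 2 ≤ n) (hz : |z| ≤ 1) :
    ∑ i ∈ Finset.range (n + 3), (vertexWeight n z (2 * i - n - 2) : ℝ) ≤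
      4 / n * (4 + Real.log n) := by
  have hharm := sum_one_div_add_one_le (n := n) (by omega)
  calc ∑ i ∈ Finset.range (n + 3), (vertexWeight n z (2 * i - n - 2) : ℝ)
      ≤ ∑ i ∈ Finset.range (n + 3), 2 / n * (1 / (i + 1) + 1 / ((n + 2 - i : ℕ) + 1) : ℝ) := by
        refine Finset.sum_le_sum fun i hi => ?_
        have hi' : i ≤ n + 2 := Nat.lt_succ_iff.1 (Finset.mem_range.1 hi)
        have hvertex : (2 * i - n - 2 : ℤ) = i - (n + 2 - i : ℕ) := by omega
        rw [hvertex]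
        exact vertexWeight_sub_le hn hz (Nat.add_sub_cancel' hi')
    _ = 2 / n * (∑ i ∈ Finset.range (n + 3), 1 / ((i : ℝ) + 1) +
          ∑ i ∈ Finset.range (n + 3), 1 / ((i : ℝ) + 1)) := by
        rw [← Finset.mul_sum, Finset.sum_add_distrib]
        congr 2
        exact Finset.sum_range_reflect (fun i => 1 / ((i : ℝ) + 1)) (n + 3)
    _ ≤ 2 / n * ((4 + Real.log n) + (4 + Real.log n)) := by gcongr
    _ = _ := by ring

lemma sum_range_comp_add_le {f : ℕ → ℝ≥0} {m k d : ℕ} (h : m + d ≤ k) :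
    ∑ i ∈ Finset.range m, f (i + d) ≤ ∑ i ∈ Finset.range k, f i := by
  calc ∑ i ∈ Finset.range m, f (i + d)
      ≤ ∑ i ∈ Finset.range d, f i + ∑ i ∈ Finset.range m, f (i + d) := le_add_self
    _ = ∑ i ∈ Finset.range (d + m), f i := by
        simp only [Finset.sum_range_add, add_comm _ d]
    _ ≤ _ := Finset.sum_le_sum_of_subset (Finset.range_mono (by omega))

lemma sum_detourError_vertexWeight_le (β γ : ℝ≥0) (hn : 2 ≤ n) (hz : |z| ≤ 1) :
    ∑ i ∈ Finset.range n, (detourError (vertexWeight n z) β γ (n : ℝ≥0)⁻¹ (-n + 2 * i) : ℝ) ≤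
      (12 * (γ + β ^ 2 / γ) * (4 + Real.log n) + 128 * (β + γ) ^ 3 / γ) / n := by
  have : (0 : ℝ) < n := by exact_mod_cast (by omega : 0 < n)
  set f : ℕ → ℝ≥0 := fun i => vertexWeight n z (2 * i - n - 2) with hf
  have hshift (d : ℕ) (hd : d ≤ 3) :
      ∑ i ∈ Finset.range n, (f (i + d) : ℝ) ≤ 4 / n * (4 + Real.log n) := by
    have hle : ∑ i ∈ Finset.range n, (f (i + d) : ℝ) ≤ ∑ i ∈ Finset.range (n + 3), (f i : ℝ) := by
      exact_mod_cast sum_range_comp_add_le (f := f) (Nat.add_le_add_left hd n)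
    exact hle.trans (sum_vertexWeight_le hn hz)
  have hterm (i : ℕ) : (detourError (vertexWeight n z) β γ (n : ℝ≥0)⁻¹ (-n + 2 * i) : ℝ) =
      (γ + β ^ 2 / γ) * (f (i + 0) + f (i + 2) + f (i + 3)) +
        128 * (β + γ) ^ 3 / γ * (n : ℝ)⁻¹ ^ 2 := by
    have h0 : (-n + 2 * i - 2 : ℤ) = 2 * (i + 0 : ℕ) - n - 2 := by omega
    have h2 : (-n + 2 * i + 2 : ℤ) = 2 * (i + 2 : ℕ) - n - 2 := by omega
    have h3 : (-n + 2 * i + 4 : ℤ) = 2 * (i + 3 : ℕ) - n - 2 := by omega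
    simp only [detourError, hf, h0, h2, h3]
    push_cast
    rfl
  simp only [hterm, Finset.sum_add_distrib, ← Finset.mul_sum, Finset.sum_const, Finset.card_range,
    nsmul_eq_mul]
  calc _ ≤ (γ + β ^ 2 / γ : ℝ) * (4 / n * (4 + Real.log n) + 4 / n * (4 + Real.log n)
          + 4 / n * (4 + Real.log n)) + 128 * (β + γ) ^ 3 / γ * (n * (n : ℝ)⁻¹ ^ 2) := by
        gcongr
        exacts [hshift 0 (by norm_num), hshift 2 (by norm_num), hshift 3 le_rfl]
    _ = _ := by field_simp; ring

lemma eventually_sum_detourError_le {β γ : ℝ≥0} (hγ : 0 < γ) :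
    ∀ᶠ n : ℕ in atTop, ∀ z : ℝ, |z| ≤ 1 →
      ∑ i ∈ Finset.range n, (detourError (vertexWeight n z) β γ (n : ℝ≥0)⁻¹ (-n + 2 * i) : ℝ) ≤
        20 * (γ + β ^ 2 / γ) * (Real.log n / n) := by
  have hA : (0 : ℝ) < 8 * (γ + β ^ 2 / γ) := by positivity
  have hlog : Tendsto (fun n : ℕ => 8 * (γ + β ^ 2 / γ : ℝ) * Real.log n) atTop atTop :=
    (Real.tendsto_log_atTop.comp tendsto_natCast_atTop_atTop).const_mul_atTop hA
  filter_upwards [eventually_ge_atTop 2, hlog.eventually_ge_atTop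
    (48 * (γ + β ^ 2 / γ) + 128 * (β + γ) ^ 3 / γ)] with n hn hlarge z hz
  refine (sum_detourError_vertexWeight_le β γ hn hz).trans ?_
  rw [← mul_div_assoc]
  gcongr
  linarith

end VertexWeight

section WalkSteps

variable {n : ℕ} {ξ x : Walk n}

/-- The steps of a walk, as a list. -/
def Walk.steps (x : Walk n) : List ℤ := List.ofFn x.step

lemma Walk.length_steps (x : Walk n) : x.steps.length = x.ν + 1 := List.length_ofFn

lemma Walk.sum_steps (x : Walk n) : x.steps.sum = 2 * n := by
  rw [Walk.steps, List.sum_ofFn]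
  linarith [x.sum_eq]

lemma Walk.steps_injective : Function.Injective (Walk.steps (n := n)) := by
  rintro ⟨ν, s, _, _, _⟩ ⟨ν', s', _, _, _⟩ h
  obtain rfl : ν = ν' := by simpa [Walk.steps] using congrArg List.length h
  obtain rfl : s = s' := List.ofFn_injective h
  rfl

lemma Walk.IsPos.eq_two_or_four_of_mem_steps (hx : x.IsPos) {y : ℤ} (hy : y ∈ x.steps) :
    y = 2 ∨ y = 4 := by
  obtain ⟨k, rfl⟩ := List.mem_ofFn.1 hy
  exact hx k

lemma vertexOf_eq_add_sum_take (x : Walk n) (s : Fin x.ν) :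
    vertexOf n x.step s = -n + (x.steps.take (s + 1)).sum := by
  rw [Walk.steps, List.sum_take_ofFn, vertexOf]
  simp only [Nat.lt_succ_iff]

lemma VertexSubseq.exists_blocks (h : VertexSubseq n ξ x) :
    ∃ L : List (List ℤ), L.map List.sum = ξ.steps ∧ L.flatten = x.steps := by
  obtain ⟨e, he, hv⟩ := h
  let p : ℕ → ℕ
    | 0 => 0
    | i + 1 => if hi : i < ξ.ν then e ⟨i, hi⟩ + 1 else x.ν + 1
  have hmono : Monotone p := by
    refine monotone_nat_of_le_succ fun i => ?_
    rcases i with _ | i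
    · exact Nat.zero_le _
    · simp only [p]
      split_ifs with hi hi' hi'
      · exact Nat.succ_le_succ (he.monotone (Nat.le_succ i))
      · exact Nat.succ_le_succ (e _).2.le
      · omega
      · rfl
  refine exists_blocks_of_sum_take_eq ξ.steps x.steps p hmono rfl ?_ ?_
  · simp [p, Walk.length_steps]
  · rintro (_ | i) hi
    · rfl
    rw [Walk.length_steps] at hi
    simp only [p]
    split_ifs with hlt
    · have := hv ⟨i, hlt⟩
      rw [vertexOf_eq_add_sum_take, vertexOf_eq_add_sum_take] at this
      exact add_left_cancel this
    · obtain rfl : i = ξ.ν := by omega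
      rw [← ξ.length_steps, ← x.length_steps, List.take_length, List.take_length, ξ.sum_steps,
        x.sum_steps]

lemma pathWeight_add_tsum_vertexSubseq_le (hξ : ξ.IsPos) (W : ℤ → ℤ → ℝ≥0∞) (u : ℤ) :
    pathWeight W u ξ.steps +
        ∑' x : {x : Walk n // ¬x.IsPos ∧ VertexSubseq n ξ x}, pathWeight W u x.1.steps ≤
      pathWeight (detourWeight W) u ξ.steps := by
  choose cut hcut hflat using fun x : {x : Walk n // ¬x.IsPos ∧ VertexSubseq n ξ x} =>
    x.2.2.exists_blocks
  let φ (x : {x : Walk n // ¬x.IsPos ∧ VertexSubseq n ξ x}) :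
    {L : List (List ℤ) // L.map List.sum = ξ.steps} := ⟨cut x, hcut x⟩
  -- `ξ` itself is the path with all detours trivial; it is not in `X_ξ`, being positive.
  let single : {L : List (List ℤ) // L.map List.sum = ξ.steps} :=
    ⟨ξ.steps.map ([·]), by simp [Function.comp_def]⟩
  have hsingle : single.1.flatten = ξ.steps := by simp [single, ← List.flatMap_def]
  have hφflat (x) : (φ x).1.flatten = x.1.steps := hflat x
  have hφ : Function.Injective φ := fun x y h => Subtype.ext <| Walk.steps_injective <| by
    rw [← hφflat, h, hφflat]
  have hnot : single ∉ Set.range φ := by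
    rintro ⟨x, hx⟩
    have : x.1 = ξ := Walk.steps_injective <| by rw [← hφflat, hx, hsingle]
    exact x.2.1 (by rwa [this])
  have h := add_tsum_comp_le_tsum_of_injective hφ hnot fun L => pathWeight W u L.1.flatten
  simpa only [hsingle, hφflat, ← pathWeight_detourWeight] using h

end WalkSteps

lemma pathWeight_stepKernel_vertexWeight_steps {n : ℕ} {V : ℤ → ℝ} {β γ : ℝ≥0}
    (hV : ∀ x, ‖V x‖₊ = stepWeight β γ x) (z : ℝ) (x : Walk n) :
    pathWeight (stepKernel (vertexWeight n z) β γ) (-n) x.steps =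
      (((n : ℝ≥0)⁻¹ * ‖Bwt V n z x‖₊ : ℝ≥0) : ℝ≥0∞) := by
  have hfirst : vertexWeight n z (-n) = (n : ℝ≥0)⁻¹ := by simp [vertexWeight]
  have hinterior (k : Fin x.ν) :
      vertexWeight n z (-n + (x.steps.take (k + 1)).sum) =
        ‖(n : ℝ) ^ 2 - (vertexOf n x.step k : ℝ) ^ 2 + z‖₊⁻¹ := by
    rw [← vertexOf_eq_add_sum_take, vertexWeight, if_neg]
    have := x.vertex_ne k
    grind
  rw [Walk.steps, pathWeight_ofFn, ← Walk.steps]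
  simp only [stepKernel, ← ENNReal.ofNNReal_finsetProd, ENNReal.coe_inj, Finset.prod_mul_distrib]
  rw [Fin.prod_univ_succ]
  simp only [Fin.val_zero, List.take_zero, List.sum_nil, add_zero, hfirst, Fin.val_succ, hinterior,
    ← hV, Finset.prod_inv_distrib]
  rw [Bwt, nnnorm_div, nnnorm_prod, nnnorm_prod, div_eq_inv_mul, mul_assoc]

lemma tsum_nnnorm_Bwt_le {n : ℕ} {V : ℤ → ℝ} {β γ : ℝ≥0} {z : ℝ} (hn : 2 ≤ n)
    (hV : ∀ x, ‖V x‖₊ = stepWeight β γ x) (hγ : 0 < γ) (hz : |z| ≤ 1)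
    (hβγ : 4 * (β + γ) * (n : ℝ≥0)⁻¹ ≤ 2⁻¹) {ξ : Walk n} (hξ : ξ.IsPos)
    (hsum : ∑ i ∈ Finset.range n,
      detourError (vertexWeight n z) β γ (n : ℝ≥0)⁻¹ (-n + 2 * i) ≤ 1) :
    ∑' x : {x : Walk n // ¬x.IsPos ∧ VertexSubseq n ξ x}, (‖Bwt V n z x.1‖₊ : ℝ≥0∞) ≤
      ↑(‖Bwt V n z ξ‖₊ * (2 * ∑ i ∈ Finset.range n,
        detourError (vertexWeight n z) β γ (n : ℝ≥0)⁻¹ (-n + 2 * i))) := by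
  set S := ∑ i ∈ Finset.range n, detourError (vertexWeight n z) β γ (n : ℝ≥0)⁻¹ (-n + 2 * i)
  have hn0 : ((n : ℝ≥0)⁻¹ : ℝ≥0) ≠ 0 := inv_ne_zero (by exact_mod_cast (by omega : n ≠ 0))
  have h := (pathWeight_add_tsum_vertexSubseq_le hξ _ (-n)).trans
    (pathWeight_detourWeight_stepKernel_le hγ (vertexWeight_le_inv hn hz) hβγ
      (fun _ => hξ.eq_two_or_four_of_mem_steps) (-n) ξ.sum_steps hsum)
  simp only [pathWeight_stepKernel_vertexWeight_steps hV, ENNReal.coe_mul _ ‖_‖₊,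
    ENNReal.tsum_mul_left, ← mul_add, mul_assoc] at h
  rw [ENNReal.mul_le_mul_iff_right (ENNReal.coe_ne_zero.2 hn0) ENNReal.coe_ne_top,
    ENNReal.coe_add, mul_add, ENNReal.coe_one, mul_one,
    ENNReal.add_le_add_iff_left ENNReal.coe_ne_top] at h
  exact_mod_cast h

lemma eventually_summable_abs_Bwt_and_tsum_le {V : ℤ → ℝ} {β γ : ℝ≥0}
    (hV : ∀ x, ‖V x‖₊ = stepWeight β γ x) (hγ : 0 < γ) :
    ∀ᶠ n : ℕ in atTop, ∀ ξ : Walk n, ξ.IsPos → ∀ z : ℝ, |z| ≤ 1 →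
      Summable (fun x : {x : Walk n // ¬x.IsPos ∧ VertexSubseq n ξ x} => |Bwt V n z x.1|) ∧
      ∑' x : {x : Walk n // ¬x.IsPos ∧ VertexSubseq n ξ x}, |Bwt V n z x.1| ≤
        |Bwt V n z ξ| * (40 * (γ + β ^ 2 / γ) * (Real.log n / n)) := by
  have hinv : ∀ᶠ n : ℕ in atTop, 4 * (β + γ) * (n : ℝ≥0)⁻¹ ≤ 2⁻¹ := by
    have hlim := (tendsto_inv_atTop_nhds_zero_nat (𝕜 := ℝ≥0)).const_mul (4 * (β + γ))
    rw [mul_zero] at hlim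
    exact hlim.eventually_le_const (by positivity)
  have hlog : ∀ᶠ n : ℕ in atTop, 20 * (γ + β ^ 2 / γ : ℝ) * (Real.log n / n) ≤ 1 := by
    have hlim := (Real.isLittleO_log_id_atTop.tendsto_div_nhds_zero.comp
      tendsto_natCast_atTop_atTop).const_mul (20 * (γ + β ^ 2 / γ : ℝ))
    rw [mul_zero] at hlim
    exact hlim.eventually_le_const one_pos
  filter_upwards [eventually_ge_atTop 2, hinv, hlog, eventually_sum_detourError_le hγ]
    with n hn hinv hlog herror ξ hξ z hz
  have hsum := herror z hz
  have htsum := tsum_nnnorm_Bwt_le hn hV hγ hz hinv hξ (by exact_mod_cast hsum.trans hlog)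
  have hsummable := ENNReal.tsum_coe_ne_top_iff_summable.1
    (ne_top_of_le_ne_top ENNReal.coe_ne_top htsum)
  rw [← ENNReal.coe_tsum hsummable, ENNReal.coe_le_coe, ← NNReal.coe_le_coe] at htsum
  push_cast [Real.norm_eq_abs] at htsum
  exact ⟨NNReal.summable_coe.2 hsummable,
    htsum.trans (mul_le_mul_of_nonneg_left (by linarith) (abs_nonneg _))⟩

lemma abs_sq_div_mul_rpow_sub (b c m1 m2 : ℝ) {q : ℝ} (hq : 0 < q) :
    |b ^ 2 / (2 * c) * q ^ (2 * m1 - m2)| = |b / 2 * q ^ m1| ^ 2 / |c / 2 * q ^ m2| := by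
  rw [← abs_pow, ← abs_div, Real.rpow_sub hq, two_mul m1, Real.rpow_add hq]
  congr 1
  field_simp

theorem stmt19 (b c q m1 m2 : ℝ) (hq : 0 < q) (hc : c ≠ 0)
    (V : ℤ → ℝ) (hV2 : V 2 = b / 2 * q ^ m1) (hV2' : V (-2) = b / 2 * q ^ m1)
    (hV4 : V 4 = c / 2 * q ^ m2) (hV4' : V (-4) = c / 2 * q ^ m2)
    (hV0 : ∀ m : ℤ, m ≠ 2 → m ≠ -2 → m ≠ 4 → m ≠ -4 → V m = 0)
    (K : ℝ)
    (hK : K = 40 * (|b / 2 * q ^ m1| + |c / 2 * q ^ m2| +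
      |b ^ 2 / (2 * c) * q ^ (2 * m1 - m2)|)) :
    ∃ n₁ : ℕ, 0 < n₁ ∧ ∀ n : ℕ, n₁ ≤ n → ∀ ξ : Walk n, ξ.IsPos → ∀ z : ℝ, |z| ≤ 1 →
      Summable (fun x : {x : Walk n // ¬x.IsPos ∧ VertexSubseq n ξ x} => |Bwt V n z x.1|) ∧
      ∑' x : {x : Walk n // ¬x.IsPos ∧ VertexSubseq n ξ x}, |Bwt V n z x.1| ≤
        |Bwt V n z ξ| * K * Real.log n / n := by
  set β : ℝ≥0 := ‖b / 2 * q ^ m1‖₊ with hβ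
  set γ : ℝ≥0 := ‖c / 2 * q ^ m2‖₊ with hγ
  have hγ0 : 0 < γ := nnnorm_pos.2 (by positivity)
  have hV (x : ℤ) : ‖V x‖₊ = stepWeight β γ x := by
    unfold stepWeight
    split_ifs with h2 h4
    · rcases eq_or_eq_neg_of_abs_eq h2 with rfl | rfl <;> simp [*]
    · rcases eq_or_eq_neg_of_abs_eq h4 with rfl | rfl <;> simp [*]
    · rw [hV0 x (by grind) (by grind) (by grind) (by grind), nnnorm_zero]
  have hKle : 40 * (γ + β ^ 2 / γ : ℝ) ≤ K := by
    rw [hK, abs_sq_div_mul_rpow_sub b c m1 m2 hq]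
    simp only [hβ, hγ, coe_nnnorm, Real.norm_eq_abs]
    linarith [abs_nonneg (b / 2 * q ^ m1)]
  obtain ⟨N, hN⟩ := eventually_atTop.1 (eventually_summable_abs_Bwt_and_tsum_le hV hγ0)
  refine ⟨N + 1, N.succ_pos, fun n hn ξ hξ z hz => ?_⟩
  obtain ⟨hsummable, hle⟩ := hN n (Nat.le_of_succ_le hn) ξ hξ z hz
  refine ⟨hsummable, hle.trans ?_⟩
  rw [mul_div_assoc, mul_assoc |Bwt V n z ξ|]
  gcongr
end
end
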